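/- Let e ≥ 2, r = 3, with D^u as above for a fixed u ∈ {1,…,6}. Then the cardinality of D^u is (y+2)(z+2) − 1, and the number of matrices M ∈ D^u such that Pt(0,M) is Kleshchev equals (y+1)(z+1). -/

import Mathlib

open scoped Classical

namespace AK
noncomputable section



/-! ### Matrices, order from base tuple, abacus β-sets -/

/-- The order ≺ on columns determined by a base tuple `B`. -/
def prec {e : ℕ} (B : Fin e → ℕ) (i j : Fin e) : Prop :=
  B i < B j ∨ (B i = B j ∧ i < j)

/-- `rank B i = π(B)⁻¹(i)`, the number of columns ≺-smaller than `i`. -/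
def rank {e : ℕ} (B : Fin e → ℕ) (i : Fin e) : Fin e :=
  ⟨(Finset.univ.filter (fun j => prec B j i)).card, by
    have h1 : (Finset.univ.filter (fun j => prec B j i)) ⊆ Finset.univ.erase i := by
      intro j hj
      rw [Finset.mem_filter] at hj
      refine Finset.mem_erase.mpr ⟨?_, Finset.mem_univ j⟩
      rintro rfl
      rcases hj.2 with h | ⟨-, h⟩ <;> exact lt_irrefl _ h
    have h2 := Finset.card_le_card h1
    have h3 : (Finset.univ.erase i).card < Finset.univ.card :=
      Finset.card_erase_lt_of_mem (Finset.mem_univ i)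
    simpa using lt_of_le_of_lt h2 h3⟩

/-- The number of beads on runner `i` of the abacus of component `s` of `Pt(B,M)`. -/
def beads {e r : ℕ} (B : Fin e → ℕ) (M : Fin r → Fin e → Bool) (s : Fin r) (i : Fin e) : ℕ :=
  B i + (if M s (rank B i) then 1 else 0)

/-- The canonical β-set of component `s` of `Pt(B,M)`. -/
def Tset {e r : ℕ} (B : Fin e → ℕ) (M : Fin r → Fin e → Bool) (s : Fin r) : Set ℤ :=
  {z | z < 0 ∨ (0 ≤ z ∧ ∃ h : z.toNat % e < e, z.toNat / e < beads B M s ⟨z.toNat % e, h⟩)}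

/-- `n_s`, the total number of beads of component `s`. -/
def nsum {e r : ℕ} (B : Fin e → ℕ) (M : Fin r → Fin e → Bool) (s : Fin r) : ℕ :=
  ∑ i : Fin e, beads B M s i

/-- Decreasing enumeration of a set of integers: `tEnum T x` is `t_{x+1}`. -/
noncomputable def tEnum (T : Set ℤ) : ℕ → ℤ
  | 0 => sSup T
  | (x + 1) => sSup (T ∩ Set.Iio (tEnum T x))

/-- The multipartition `Pt(B,M)`: component `s`, part `p+1` (0-indexed parts). -/
noncomputable def PtPart {e r : ℕ} (B : Fin e → ℕ) (M : Fin r → Fin e → Bool)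
    (s : Fin r) (p : ℕ) : ℕ :=
  (tEnum (Tset B M s) p + (p + 1) - (nsum B M s : ℤ)).toNat

/-- The multicharge of `Pt(B,M)`. -/
noncomputable def PtCharge {e r : ℕ} (B : Fin e → ℕ) (M : Fin r → Fin e → Bool)
    (s : Fin r) : ZMod e :=
  (nsum B M s : ZMod e)

/-! ### Nodes, good nodes and Kleshchev multipartitions -/

/-- A node `(s, x, y)` (all 0-indexed). -/
abbrev Node (r : ℕ) := Fin r × ℕ × ℕ

/-- `A` is above `B`. -/
def NodeAbove {r : ℕ} (A B : Node r) : Prop :=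
  A.1 < B.1 ∨ (A.1 = B.1 ∧ A.2.1 < B.2.1)

/-- The residue of a node. -/
def res {e r : ℕ} (a : Fin r → ZMod e) (A : Node r) : ZMod e :=
  a A.1 - (A.2.1 : ZMod e) + (A.2.2 : ZMod e)

/-- `A` is a removable node of `lam`. -/
def Removable {r : ℕ} (lam : Fin r → ℕ → ℕ) (A : Node r) : Prop :=
  A.2.2 + 1 = lam A.1 A.2.1 ∧ lam A.1 (A.2.1 + 1) < lam A.1 A.2.1

/-- `A` is an addable node of `lam`. -/
def Addable {r : ℕ} (lam : Fin r → ℕ → ℕ) (A : Node r) : Prop :=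
  A.2.2 = lam A.1 A.2.1 ∧ (A.2.1 = 0 ∨ lam A.1 A.2.1 < lam A.1 (A.2.1 - 1))

/-- `A` is a normal node of `lam`. -/
def Normal {e r : ℕ} (a : Fin r → ZMod e) (lam : Fin r → ℕ → ℕ) (A : Node r) : Prop :=
  Removable lam A ∧
    ∀ B : Node r, Addable lam B → res a B = res a A → NodeAbove A B →
      Set.ncard {C : Node r | Addable lam C ∧ res a C = res a A ∧ NodeAbove A C ∧ NodeAbove C B}
        < Set.ncard {C : Node r | Removable lam C ∧ res a C = res a A ∧ NodeAbove A C ∧ NodeAbove C B}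

/-- `A` is a good node of `lam`: normal, and highest among normal nodes of its residue. -/
def Good {e r : ℕ} (a : Fin r → ZMod e) (lam : Fin r → ℕ → ℕ) (A : Node r) : Prop :=
  Normal a lam A ∧ ∀ B : Node r, Normal a lam B → res a B = res a A → B ≠ A → NodeAbove A B

/-- Remove the node `A` from `lam`. -/
def removeNode {r : ℕ} (lam : Fin r → ℕ → ℕ) (A : Node r) : Fin r → ℕ → ℕ :=
  fun s x => if s = A.1 ∧ x = A.2.1 then lam s x - 1 else lam s x

/-- Kleshchev multipartitions (for the multicharge `a`). -/
inductive IsKleshchev {e r : ℕ} (a : Fin r → ZMod e) : (Fin r → ℕ → ℕ) → Prop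
  | empty : IsKleshchev a (fun _ _ => 0)
  | step (lam : Fin r → ℕ → ℕ) (A : Node r) (hA : Good a lam A)
      (h : IsKleshchev a (removeNode lam A)) : IsKleshchev a lam

/-! ### Weights and bead swaps -/

/-- `δ₊^M(t,s)`. -/
def deltaP {e r : ℕ} (M : Fin r → Fin e → Bool) (t s : Fin r) : ℕ :=
  (Finset.univ.filter (fun i => M t i = true ∧ M s i = false)).card

/-- `wt^M(t,s)`. -/
def wtPair {e r : ℕ} (M : Fin r → Fin e → Bool) (t s : Fin r) : ℕ :=
  min (deltaP M t s) (deltaP M s t)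

/-- `wt(M)`. -/
def wtM {e r : ℕ} (M : Fin r → Fin e → Bool) : ℕ :=
  ∑ t : Fin r, ∑ s ∈ Finset.univ.filter (· < t), wtPair M t s

/-- `M'` is obtained from `M` by a bead swap. -/
def BeadSwap {e r : ℕ} (M M' : Fin r → Fin e → Bool) : Prop :=
  ∃ i j : Fin e, i ≠ j ∧ ∃ s t : Fin r, s ≠ t ∧
    M s i = true ∧ M t j = true ∧ M s j = false ∧ M t i = false ∧
    M' s i = false ∧ M' t j = false ∧ M' s j = true ∧ M' t i = true ∧
    (∀ s' i', (s' ≠ s ∧ s' ≠ t) ∨ (i' ≠ i ∧ i' ≠ j) → M' s' i' = M s' i')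




/-! ### The families `α^u_k`, `β^u_l`, `γ^u_{kl}` for `r = 3` -/

def xcol : Fin 6 → Fin 3 → Bool := fun _ => ![false, false, false]

def ycol : Fin 6 → Fin 3 → Bool :=
  ![![false,true,true], ![true,false,false], ![true,true,false],
    ![false,false,true], ![false,true,true], ![true,false,false]]

def zcol : Fin 6 → Fin 3 → Bool :=
  ![![false,false,true], ![true,false,true], ![false,true,false],
    ![true,false,true], ![false,true,false], ![true,true,false]]

def oycol : Fin 6 → Fin 3 → Bool :=
  ![![true,false,true], ![false,false,true], ![false,true,true],
    ![true,false,false], ![true,true,false], ![false,true,false]]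

def ozcol : Fin 6 → Fin 3 → Bool :=
  ![![false,true,false], ![true,true,false], ![true,false,false],
    ![false,true,true], ![false,false,true], ![true,false,true]]

def aacol : Fin 6 → Fin 3 → Bool :=
  ![![true,true,false], ![false,true,false], ![true,false,true],
    ![false,true,false], ![true,false,true], ![false,false,true]]

def abcol : Fin 6 → Fin 3 → Bool :=
  ![![true,false,false], ![false,true,true], ![false,false,true],
    ![true,true,false], ![true,false,false], ![false,true,true]]

variable {e : ℕ}

/-- The matrix `α^u_k`. -/
def alphaM (Y Z : Finset (Fin e)) {y : ℕ} (hY : Y.card = y + 1) (u : Fin 6)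
    (k : Fin (y + 1)) : Fin 3 → Fin e → Bool :=
  fun s c =>
    if c = Y.orderEmbOfFin hY k then aacol u s
    else if c ∈ Y then ycol u s
    else if c ∈ Z then zcol u s
    else false

/-- The matrix `β^u_l`. -/
def betaM (Y Z : Finset (Fin e)) {z : ℕ} (hZ : Z.card = z + 1) (u : Fin 6)
    (l : Fin (z + 1)) : Fin 3 → Fin e → Bool :=
  fun s c =>
    if c = Z.orderEmbOfFin hZ l then abcol u s
    else if c ∈ Z then zcol u s
    else if c ∈ Y then ycol u s
    else false

/-- The matrix `γ^u_{kl}`. -/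
def gammaM (Y Z : Finset (Fin e)) {y z : ℕ} (hY : Y.card = y + 1) (hZ : Z.card = z + 1)
    (u : Fin 6) (k : Fin (y + 1)) (l : Fin (z + 1)) : Fin 3 → Fin e → Bool :=
  fun s c =>
    if c = Y.orderEmbOfFin hY k then oycol u s
    else if c = Z.orderEmbOfFin hZ l then ozcol u s
    else if c ∈ Y then ycol u s
    else if c ∈ Z then zcol u s
    else false

/-- The set `D^u` of matrices in the block. -/
def Duset (Y Z : Finset (Fin e)) {y z : ℕ} (hY : Y.card = y + 1) (hZ : Z.card = z + 1)
    (u : Fin 6) : Set (Fin 3 → Fin e → Bool) :=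
  {A | (∃ k, A = alphaM Y Z hY u k) ∨ (∃ l, A = betaM Y Z hZ u l) ∨
       (∃ k l, A = gammaM Y Z hY hZ u k l)}

/-!
On an abacus a partition is a set of beads, and removing a good node slides a bead down by one. If
the rows of a three-row configuration are monotone in cardinality, the signature rule makes good
moves preserve dominance of neighbouring rows, and as long as dominance holds and some bead can
slide, some good move is available; hence a configuration is Kleshchev exactly when each row
dominates the next one. The rows of a matrix in `D^u` are a singleton, a core of about `Y` and a
large row of about `Y ∪ Z`. When they are not in monotone order, the combinatorial `R`-matrix,
which exchanges a singleton with a neighbouring row, changes neither the good moves available nor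
where they lead, and brings the rows into monotone order.

Up to a permutation of the rows and swapping `Y` with `Z`, every `D^u` is `D^1` (the index `0` of
`Fin 6`), so the six cases are the six orders of the rows, and reversing the order of the columns
together with that of the rows leaves three. In each of them the `γ_{kl}` that are not Kleshchev
form a cross in the `k`-`l` grid whose two arms match the Kleshchev `α_k` and `β_l`. So the
Kleshchev matrices in `D^u` are as many as the `γ_{kl}`.
-/

section

open Finset

/-! ### Sliding beads -/

/-- The bead of `P` at `i + 1` can be slid down to `i`: the abacus form of a removable node. -/
def RemovableBead (i : ℕ) (P : Finset ℕ) : Prop := i + 1 ∈ P ∧ i ∉ P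

/-- The bead of `P` at `i` can be slid up to `i + 1`: the abacus form of an addable node. -/
def AddableBead (i : ℕ) (P : Finset ℕ) : Prop := i ∈ P ∧ i + 1 ∉ P

/-- The bead set obtained from `P` by sliding the bead at `i + 1` down to `i`. -/
def slide (i : ℕ) (P : Finset ℕ) : Finset ℕ := insert i (P.erase (i + 1))

/-- No bead of `P` can be slid down: the abacus form of the empty partition. -/
def Flush (P : Finset ℕ) : Prop := ∀ i, ¬ RemovableBead i P

theorem RemovableBead.not_addable {i : ℕ} {P : Finset ℕ} (h : RemovableBead i P) :
    ¬ AddableBead i P := fun h' => h'.2 h.1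

theorem mem_slide {i x : ℕ} {P : Finset ℕ} :
    x ∈ slide i P ↔ x = i ∨ x ≠ i + 1 ∧ x ∈ P := by
  simp only [slide, mem_insert, mem_erase]

theorem card_slide {i : ℕ} {P : Finset ℕ} (h : RemovableBead i P) :
    (slide i P).card = P.card := by
  rw [slide, card_insert_of_notMem (fun hi => h.2 (mem_of_mem_erase hi)),
    card_erase_add_one h.1]

theorem sum_slide {i : ℕ} {P : Finset ℕ} (h : RemovableBead i P) :
    ∑ x ∈ slide i P, x + 1 = ∑ x ∈ P, x := by
  rw [slide, sum_insert (fun hi => h.2 (mem_of_mem_erase hi)), ← add_sum_erase P _ h.1]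
  ring

theorem count_slide {i : ℕ} {P : Finset ℕ} (h : RemovableBead i P) (c : ℕ) :
    Nat.count (· ∈ slide i P) c = Nat.count (· ∈ P) c + if c = i + 1 then 1 else 0 := by
  obtain ⟨hi₁, hi⟩ := h
  induction c with
  | zero => simp
  | succ c ih =>
    rw [Nat.count_succ, Nat.count_succ, ih]
    rcases eq_or_ne c i with rfl | hci
    · simp [mem_slide, hi]
    rcases eq_or_ne c (i + 1) with rfl | hci'
    · simp [mem_slide, hi₁]
    · simp [mem_slide, hci, hci']

theorem count_mem_eq_card_filter (P : Finset ℕ) (c : ℕ) :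
    Nat.count (· ∈ P) c = #{x ∈ P | x < c} := by
  rw [Nat.count_eq_card_filter_range]
  congr 1
  ext x
  simp only [mem_filter, mem_range, and_comm]

theorem count_mem_le_card (P : Finset ℕ) (c : ℕ) : Nat.count (· ∈ P) c ≤ P.card := by
  rw [count_mem_eq_card_filter]
  exact card_filter_le _ _

theorem count_mem_lt_card {P : Finset ℕ} {c x : ℕ} (hx : x ∈ P) (hc : c ≤ x) :
    Nat.count (· ∈ P) c < P.card := by
  rw [count_mem_eq_card_filter]
  exact card_lt_card (filter_ssubset.2 ⟨x, hx, hc.not_gt⟩)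

theorem Flush.mem_of_le {P : Finset ℕ} (hP : Flush P) {x y : ℕ} (hx : x ∈ P) (hyx : y ≤ x) :
    y ∈ P := by
  induction x, hyx using Nat.le_induction with
  | base => exact hx
  | succ x _ ih =>
    exact ih (by_contra fun h => hP x ⟨hx, h⟩)

theorem Flush.eq_range {P : Finset ℕ} (hP : Flush P) : P = range P.card := by
  ext x
  rw [mem_range]
  constructor
  · intro hx
    have hsub : range (x + 1) ⊆ P := fun y hy => hP.mem_of_le hx (mem_range_succ_iff.1 hy)
    simpa [Nat.succ_le_iff] using card_le_card hsub
  · intro hx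
    by_contra hxP
    have hsub : P ⊆ range x := fun y hy =>
      mem_range.2 (lt_of_not_ge fun hxy => hxP (hP.mem_of_le hy hxy))
    exact hx.not_ge (by simpa using card_le_card hsub)

theorem Flush.mem_iff {P : Finset ℕ} (hP : Flush P) {x : ℕ} : x ∈ P ↔ x < P.card := by
  conv_lhs => rw [hP.eq_range, mem_range]

theorem Flush.count_eq {P : Finset ℕ} (hP : Flush P) (c : ℕ) :
    Nat.count (· ∈ P) c = min c P.card := by
  simp only [hP.mem_iff, Nat.count_eq_card_filter_range]
  rw [← card_range (min c P.card)]
  congr 1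
  ext x
  simp only [mem_filter, mem_range, lt_min_iff]

/-! ### Dominance -/

/-- Below every height `c`, the bead set `Q` has at most `d` more beads than `P`. -/
def Dominates (d : ℕ) (P Q : Finset ℕ) : Prop :=
  ∀ c, Nat.count (· ∈ Q) c ≤ d + Nat.count (· ∈ P) c

theorem Dominates.trans {d d' : ℕ} {P Q R : Finset ℕ} (hPQ : Dominates d P Q)
    (hQR : Dominates d' Q R) : Dominates (d + d') P R := fun c => by
  have := hPQ c
  have := hQR c
  omega

theorem Flush.dominates {P Q : Finset ℕ} (hP : Flush P) (hQ : Flush Q) {d : ℕ}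
    (hd : Q.card ≤ d + P.card) : Dominates d P Q := fun c => by
  rw [hP.count_eq, hQ.count_eq]
  omega

/-- Sliding can only spoil or restore the inequality at height `i + 1`, where it follows from
those at `i` and `i + 2`. -/
theorem dominates_slide_left {d i : ℕ} {P Q : Finset ℕ} (hP : RemovableBead i P)
    (hQ : ¬ AddableBead i Q) : Dominates d (slide i P) Q ↔ Dominates d P Q := by
  refine ⟨fun h c => ?_, fun h c => (h c).trans (by rw [count_slide hP]; omega)⟩
  rcases ne_or_eq c (i + 1) with hc | rfl
  · simpa [count_slide hP, hc] using h c
  have below := h i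
  have above := h (i + 1 + 1)
  simp only [count_slide hP, Nat.count_succ, hP.1, hP.2] at below above ⊢
  simp only [AddableBead] at hQ
  split_ifs at * <;> first | omega | tauto

theorem dominates_slide_right {d i : ℕ} {P Q : Finset ℕ} (hQ : RemovableBead i Q)
    (hP : ¬ RemovableBead i P) : Dominates d P (slide i Q) ↔ Dominates d P Q := by
  refine ⟨fun h c => le_trans (by rw [count_slide hQ]; omega) (h c), fun h c => ?_⟩
  rcases ne_or_eq c (i + 1) with hc | rfl
  · simpa [count_slide hQ, hc] using h c
  have below := h i
  have above := h (i + 1 + 1)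
  simp only [count_slide hQ, Nat.count_succ, hQ.1, hQ.2] at below above ⊢
  simp only [RemovableBead] at hP
  split_ifs at * <;> first | omega | tauto

/-- If `Q` is full below its top and dominated by `P` tightly enough, an addable bead of `Q`
would force a bead of `P` to be missing. -/
theorem Dominates.not_addable {d i : ℕ} {P Q : Finset ℕ} (h : Dominates d P Q) (hQ : Flush Q)
    (hd : Q.card = d + P.card ∨ d = 0) (hP : RemovableBead i P) : ¬ AddableBead i Q := by
  rintro ⟨hi, hi₁⟩
  rw [hQ.mem_iff] at hi hi₁
  have hcount := h (i + 1)
  rw [hQ.count_eq, min_eq_left (by omega)] at hcount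
  rcases hd with hd | rfl
  · have := count_mem_lt_card hP.1 le_rfl
    omega
  · have : Nat.count (· ∈ P) i ≤ i := Nat.count_le _
    simp only [Nat.count_succ, hP.2, if_false] at hcount
    omega

/-! ### Kleshchev triples of bead sets -/

/-- `GoodMove P Q R P' Q' R'`: sliding a good bead of the three-row configuration `(P, Q, R)` gives
`(P', Q', R')`. The side conditions are the three-row case of the signature rule, in which `R` is
the lowest row. -/
inductive GoodMove : (P Q R P' Q' R' : Finset ℕ) → Prop
  | fst {i : ℕ} {P Q R : Finset ℕ} (hP : RemovableBead i P) (hQ : ¬ AddableBead i Q)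
      (hR : AddableBead i R → RemovableBead i Q) : GoodMove P Q R (slide i P) Q R
  | snd {i : ℕ} {P Q R : Finset ℕ} (hQ : RemovableBead i Q) (hR : ¬ AddableBead i R)
      (hP : ¬ RemovableBead i P) : GoodMove P Q R P (slide i Q) R
  | trd {i : ℕ} {P Q R : Finset ℕ} (hR : RemovableBead i R) (hQ : ¬ RemovableBead i Q)
      (hP : RemovableBead i P → AddableBead i Q) : GoodMove P Q R P Q (slide i R)

/-- Three-row bead configurations that good moves can bring to a flush configuration: the abacus
form of Kleshchev `3`-multipartitions. -/
inductive KleshchevTriple : (P Q R : Finset ℕ) → Prop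
  | flush {P Q R : Finset ℕ} (hP : Flush P) (hQ : Flush Q) (hR : Flush R) : KleshchevTriple P Q R
  | move {P Q R P' Q' R' : Finset ℕ} (h : GoodMove P Q R P' Q' R')
      (h' : KleshchevTriple P' Q' R') : KleshchevTriple P Q R

section GoodMove

variable {P Q R P' Q' R' : Finset ℕ} {d : ℕ}

theorem GoodMove.card_eq (h : GoodMove P Q R P' Q' R') :
    P'.card = P.card ∧ Q'.card = Q.card ∧ R'.card = R.card := by
  cases h with
  | fst hP => exact ⟨card_slide hP, rfl, rfl⟩
  | snd hQ => exact ⟨rfl, card_slide hQ, rfl⟩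
  | trd hR => exact ⟨rfl, rfl, card_slide hR⟩

theorem GoodMove.sum_lt (h : GoodMove P Q R P' Q' R') :
    ∑ x ∈ P', x + ∑ x ∈ Q', x + ∑ x ∈ R', x < ∑ x ∈ P, x + ∑ x ∈ Q, x + ∑ x ∈ R, x := by
  cases h with
  | fst hP => have := sum_slide hP; omega
  | snd hQ => have := sum_slide hQ; omega
  | trd hR => have := sum_slide hR; omega

theorem GoodMove.dominates_fst_snd_iff (h : GoodMove P Q R P' Q' R') :
    Dominates d P' Q' ↔ Dominates d P Q := by
  cases h with
  | fst hP hQ => exact dominates_slide_left hP hQ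
  | snd hQ _ hP => exact dominates_slide_right hQ hP
  | trd => rfl

theorem GoodMove.dominates_snd_trd_iff (h : GoodMove P Q R P' Q' R') :
    Dominates d Q' R' ↔ Dominates d Q R := by
  cases h with
  | fst => rfl
  | snd hQ hR => exact dominates_slide_left hQ hR
  | trd hR hQ => exact dominates_slide_right hR hQ

theorem KleshchevTriple.dominates_fst_snd (h : KleshchevTriple P Q R)
    (hd : Q.card ≤ d + P.card) : Dominates d P Q := by
  induction h with
  | flush hP hQ => exact hP.dominates hQ hd
  | move h _ ih =>
    obtain ⟨hP, hQ, -⟩ := h.card_eq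
    exact h.dominates_fst_snd_iff.1 (ih (by rwa [hP, hQ]))

theorem KleshchevTriple.dominates_snd_trd (h : KleshchevTriple P Q R)
    (hd : R.card ≤ d + Q.card) : Dominates d Q R := by
  induction h with
  | flush _ hQ hR => exact hQ.dominates hR hd
  | move h _ ih =>
    obtain ⟨-, hQ, hR⟩ := h.card_eq
    exact h.dominates_snd_trd_iff.1 (ih (by rwa [hQ, hR]))

theorem exists_goodMove_of_removable_snd {i : ℕ} (hQ : RemovableBead i Q)
    (hR : ¬ AddableBead i R) : ∃ P' Q' R', GoodMove P Q R P' Q' R' := by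
  by_cases hP : RemovableBead i P
  · exact ⟨_, _, _, .fst hP hQ.not_addable fun _ => hQ⟩
  · exact ⟨_, _, _, .snd hQ hR hP⟩

theorem exists_goodMove_of_removable_trd {i : ℕ} (hR : RemovableBead i R) :
    ∃ P' Q' R', GoodMove P Q R P' Q' R' := by
  by_cases hQ : RemovableBead i Q
  · exact exists_goodMove_of_removable_snd hQ hR.not_addable
  by_cases hP : RemovableBead i P ∧ ¬ AddableBead i Q
  · exact ⟨_, _, _, .fst hP.1 hP.2 fun h => absurd h hR.not_addable⟩
  · exact ⟨_, _, _, .trd hR hQ fun h => by_contra fun h' => hP ⟨h, h'⟩⟩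

theorem exists_goodMove_of_dominates {d₁ d₂ : ℕ}
    (hd : (Q.card = d₁ + P.card ∧ R.card = d₂ + Q.card) ∨ (d₁ = 0 ∧ d₂ = 0))
    (hPQ : Dominates d₁ P Q) (hQR : Dominates d₂ Q R) (hflush : ¬ (Flush P ∧ Flush Q ∧ Flush R)) :
    ∃ P' Q' R', GoodMove P Q R P' Q' R' := by
  by_cases hR : Flush R
  · by_cases hQ : Flush Q
    · obtain ⟨i, hP⟩ := not_forall_not.1 fun hP => hflush ⟨hP, hQ, hR⟩
      have hQi : ¬ AddableBead i Q := hPQ.not_addable hQ (by omega) hP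
      have hRi : ¬ AddableBead i R := (hPQ.trans hQR).not_addable hR (by omega) hP
      exact ⟨_, _, _, .fst hP hQi fun h => absurd h hRi⟩
    · obtain ⟨i, hQ⟩ := not_forall_not.1 hQ
      exact exists_goodMove_of_removable_snd hQ (hQR.not_addable hR (by omega) hQ)
  · obtain ⟨i, hR⟩ := not_forall_not.1 hR
    exact exists_goodMove_of_removable_trd hR

theorem kleshchevTriple_of_dominates {d₁ d₂ : ℕ}
    (hd : (Q.card = d₁ + P.card ∧ R.card = d₂ + Q.card) ∨ (d₁ = 0 ∧ d₂ = 0))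
    (hPQ : Dominates d₁ P Q) (hQR : Dominates d₂ Q R) : KleshchevTriple P Q R := by
  induction hn : ∑ x ∈ P, x + ∑ x ∈ Q, x + ∑ x ∈ R, x using Nat.strong_induction_on
    generalizing P Q R with
  | _ n ih =>
    by_cases hflush : Flush P ∧ Flush Q ∧ Flush R
    · exact .flush hflush.1 hflush.2.1 hflush.2.2
    obtain ⟨P', Q', R', h⟩ := exists_goodMove_of_dominates hd hPQ hQR hflush
    obtain ⟨hP, hQ, hR⟩ := h.card_eq
    exact .move h (ih _ (hn ▸ h.sum_lt) (by rwa [hP, hQ, hR]) (h.dominates_fst_snd_iff.2 hPQ)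
      (h.dominates_snd_trd_iff.2 hQR) rfl)

theorem kleshchevTriple_iff_of_card_le (hPQ : P.card ≤ Q.card) (hQR : Q.card ≤ R.card) :
    KleshchevTriple P Q R ↔
      Dominates (Q.card - P.card) P Q ∧ Dominates (R.card - Q.card) Q R :=
  ⟨fun h => ⟨h.dominates_fst_snd (by omega), h.dominates_snd_trd (by omega)⟩,
    fun h => kleshchevTriple_of_dominates (by omega) h.1 h.2⟩

theorem kleshchevTriple_iff_of_le_card (hPQ : Q.card ≤ P.card) (hQR : R.card ≤ Q.card) :
    KleshchevTriple P Q R ↔ Dominates 0 P Q ∧ Dominates 0 Q R :=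
  ⟨fun h => ⟨h.dominates_fst_snd (by omega), h.dominates_snd_trd (by omega)⟩,
    fun h => kleshchevTriple_of_dominates (by omega) h.1 h.2⟩

end GoodMove

/-! ### The combinatorial `R`-matrix -/

/-- A good `i`-move of a two-row configuration, that is, the Kashiwara operator `ẽ_i` on a tensor
product of two crystals of columns. -/
inductive PairMove (i : ℕ) : (P Q P' Q' : Finset ℕ) → Prop
  | fst {P Q : Finset ℕ} (hP : RemovableBead i P) (hQ : ¬ AddableBead i Q) :
      PairMove i P Q (slide i P) Q
  | snd {P Q : Finset ℕ} (hQ : RemovableBead i Q) (hP : ¬ RemovableBead i P) :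
      PairMove i P Q P (slide i Q)

/-- The condition `φ_i > 0` on a two-row configuration: the signature rule leaves an addable bead
at `i`. -/
def PairAddable (i : ℕ) (P Q : Finset ℕ) : Prop :=
  AddableBead i P ∨ AddableBead i Q ∧ ¬ RemovableBead i P

/-- `r P Q P' Q'` relates two-row configurations that the moves cannot distinguish: a (relational)
isomorphism of crystals of two-row configurations. -/
structure IsCrystalIso (r : (P Q P' Q' : Finset ℕ) → Prop) : Prop where
  exists_move {i : ℕ} {P Q P' Q' P₁ Q₁ : Finset ℕ} : r P Q P' Q' → PairMove i P Q P₁ Q₁ →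
    ∃ P₁' Q₁', PairMove i P' Q' P₁' Q₁' ∧ r P₁ Q₁ P₁' Q₁'
  exists_move_symm {i : ℕ} {P Q P' Q' P₁' Q₁' : Finset ℕ} : r P Q P' Q' → PairMove i P' Q' P₁' Q₁' →
    ∃ P₁ Q₁, PairMove i P Q P₁ Q₁ ∧ r P₁ Q₁ P₁' Q₁'
  removable_iff {P Q P' Q' : Finset ℕ} (i : ℕ) : r P Q P' Q' →
    (RemovableBead i P ∧ RemovableBead i Q ↔ RemovableBead i P' ∧ RemovableBead i Q')
  addable_iff {P Q P' Q' : Finset ℕ} (i : ℕ) : r P Q P' Q' →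
    (PairAddable i P Q ↔ PairAddable i P' Q')
  flush_iff {P Q P' Q' : Finset ℕ} : r P Q P' Q' → (Flush P ∧ Flush Q ↔ Flush P' ∧ Flush Q')

section CrystalIso

variable {P Q R P' Q' R' : Finset ℕ} {r : (P Q P' Q' : Finset ℕ) → Prop}

theorem IsCrystalIso.symm (hr : IsCrystalIso r) :
    IsCrystalIso fun P Q P' Q' => r P' Q' P Q where
  exists_move := hr.exists_move_symm
  exists_move_symm := hr.exists_move
  removable_iff i h := (hr.removable_iff i h).symm
  addable_iff i h := (hr.addable_iff i h).symm
  flush_iff h := (hr.flush_iff h).symm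

theorem forall_not_pairMove_iff {i : ℕ} : (∀ P' Q', ¬ PairMove i P Q P' Q') ↔
    ¬ RemovableBead i Q ∧ (RemovableBead i P → AddableBead i Q) := by
  constructor
  · intro h
    have hQ : ¬ RemovableBead i Q := fun hQ => by
      by_cases hP : RemovableBead i P
      · exact h _ _ (.fst hP hQ.not_addable)
      · exact h _ _ (.snd hQ hP)
    exact ⟨hQ, fun hP => by_contra fun hQ' => h _ _ (.fst hP hQ')⟩
  · rintro ⟨hQ, hPQ⟩ _ _ (⟨hP, hQ'⟩ | ⟨hQ', -⟩)
    · exact hQ' (hPQ hP)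
    · exact hQ hQ'

theorem goodMove_iff_pairMove_fst_snd : GoodMove P Q R P' Q' R' ↔
    (∃ i, PairMove i P Q P' Q' ∧ R' = R ∧
      (AddableBead i R → RemovableBead i P ∧ RemovableBead i Q)) ∨
    ∃ i, RemovableBead i R ∧ (∀ P₁ Q₁, ¬ PairMove i P Q P₁ Q₁) ∧
      P' = P ∧ Q' = Q ∧ R' = slide i R := by
  simp only [forall_not_pairMove_iff]
  constructor
  · rintro (⟨hP, hQ, hR⟩ | ⟨hQ, hR, hP⟩ | ⟨hR, hQ, hP⟩)
    · exact .inl ⟨_, .fst hP hQ, rfl, fun h => ⟨hP, hR h⟩⟩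
    · exact .inl ⟨_, .snd hQ hP, rfl, fun h => absurd h hR⟩
    · exact .inr ⟨_, hR, ⟨hQ, hP⟩, rfl, rfl, rfl⟩
  · rintro (⟨i, ⟨hP, hQ⟩ | ⟨hQ, hP⟩, rfl, hR⟩ | ⟨i, hR, ⟨hQ, hP⟩, rfl, rfl, rfl⟩)
    · exact .fst hP hQ fun h => (hR h).2
    · exact .snd hQ (fun h => hP (hR h).1) hP
    · exact .trd hR hQ hP

theorem goodMove_iff_pairMove_snd_trd : GoodMove P Q R P' Q' R' ↔
    (∃ i, PairMove i Q R Q' R' ∧ P' = P ∧ (RemovableBead i P → PairAddable i Q R)) ∨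
    ∃ i, RemovableBead i P ∧ ¬ PairAddable i Q R ∧ P' = slide i P ∧ Q' = Q ∧ R' = R := by
  simp only [PairAddable]
  constructor
  · rintro (⟨hP, hQ, hR⟩ | ⟨hQ, hR, hP⟩ | ⟨hR, hQ, hP⟩)
    · exact .inr ⟨_, hP, by tauto, rfl, rfl, rfl⟩
    · exact .inl ⟨_, .fst hQ hR, rfl, fun h => absurd h hP⟩
    · exact .inl ⟨_, .snd hR hQ, rfl, fun h => .inl (hP h)⟩
  · rintro (⟨i, ⟨hQ, hR⟩ | ⟨hR, hQ⟩, rfl, hP⟩ | ⟨i, hP, hQR, rfl, rfl, rfl⟩)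
    · have := hQ.not_addable
      exact .snd hQ hR (by tauto)
    · have := hR.not_addable
      exact .trd hR hQ (by tauto)
    · exact .fst hP (by tauto) (by tauto)

theorem IsCrystalIso.kleshchevTriple_fst_snd (hr : IsCrystalIso r) (h : KleshchevTriple P Q R)
    (hPQ : r P Q P' Q') : KleshchevTriple P' Q' R := by
  induction h generalizing P' Q' with
  | flush hP hQ hR =>
    obtain ⟨hP', hQ'⟩ := (hr.flush_iff hPQ).1 ⟨hP, hQ⟩
    exact .flush hP' hQ' hR
  | move h _ ih =>
    rcases goodMove_iff_pairMove_fst_snd.1 h with ⟨i, hmove, rfl, hR⟩ | ⟨i, hR, hno, rfl, rfl, rfl⟩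
    · obtain ⟨P₁', Q₁', hmove', hPQ₁⟩ := hr.exists_move hPQ hmove
      rw [hr.removable_iff i hPQ] at hR
      exact .move (goodMove_iff_pairMove_fst_snd.2 (.inl ⟨i, hmove', rfl, hR⟩)) (ih hPQ₁)
    · have hno' : ∀ P₁ Q₁, ¬ PairMove i P' Q' P₁ Q₁ := fun _ _ hmove' =>
        let ⟨_, _, hmove, _⟩ := hr.exists_move_symm hPQ hmove'
        hno _ _ hmove
      exact .move (goodMove_iff_pairMove_fst_snd.2 (.inr ⟨i, hR, hno', rfl, rfl, rfl⟩)) (ih hPQ)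

theorem IsCrystalIso.kleshchevTriple_snd_trd (hr : IsCrystalIso r) (h : KleshchevTriple P Q R)
    (hQR : r Q R Q' R') : KleshchevTriple P Q' R' := by
  induction h generalizing Q' R' with
  | flush hP hQ hR =>
    obtain ⟨hQ', hR'⟩ := (hr.flush_iff hQR).1 ⟨hQ, hR⟩
    exact .flush hP hQ' hR'
  | move h _ ih =>
    rcases goodMove_iff_pairMove_snd_trd.1 h with ⟨i, hmove, rfl, hP⟩ | ⟨i, hP, hno, rfl, rfl, rfl⟩
    · obtain ⟨Q₁', R₁', hmove', hQR₁⟩ := hr.exists_move hQR hmove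
      rw [hr.addable_iff i hQR] at hP
      exact .move (goodMove_iff_pairMove_snd_trd.2 (.inl ⟨i, hmove', rfl, hP⟩)) (ih hQR₁)
    · rw [hr.addable_iff i hQR] at hno
      exact .move (goodMove_iff_pairMove_snd_trd.2 (.inr ⟨i, hP, hno, rfl, rfl, rfl⟩)) (ih hQR)

end CrystalIso

/-- The combinatorial `R`-matrix when one of the two rows is a singleton: it moves all the beads
of the large row but `p` to the other side, where no bead lies between `p` and the bead `q`. -/
inductive Exchange : (P Q P' Q' : Finset ℕ) → Prop
  | intro {p q : ℕ} {W : Finset ℕ} (hpq : p ≤ q) (hW : ∀ x ∈ W, x < p ∨ q < x) :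
      Exchange (insert p W) {q} {p} (insert q W)

theorem Exchange.of_eq {p q : ℕ} {W P Q P' Q' : Finset ℕ} (hpq : p ≤ q)
    (hW : ∀ x ∈ W, x < p ∨ q < x) (hP : P = insert p W) (hQ : Q = {q}) (hP' : P' = {p})
    (hQ' : Q' = insert q W) : Exchange P Q P' Q' := by
  subst hP hQ hP' hQ'
  exact .intro hpq hW

theorem Exchange.exists_move {i : ℕ} {P Q P' Q' P₁ Q₁ : Finset ℕ} (h : Exchange P Q P' Q')
    (hmove : PairMove i P Q P₁ Q₁) :
    ∃ P₁' Q₁', PairMove i P' Q' P₁' Q₁' ∧ Exchange P₁ Q₁ P₁' Q₁' := by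
  obtain @⟨p, q, W, hpq, hW⟩ := h
  rcases hmove with ⟨hP, hQ⟩ | ⟨hQ, hP⟩ <;> simp only [RemovableBead, AddableBead] at hP hQ
  · by_cases hip : i + 1 = p
    · refine ⟨_, _, .fst ?_ ?_, .of_eq (p := i) (q := q) (W := W) ?_ ?_ ?_ ?_ ?_ ?_⟩ <;>
        grind [RemovableBead, AddableBead, slide]
    · refine ⟨_, _, .snd ?_ ?_, .of_eq (p := p) (q := q) (W := slide i W) ?_ ?_ ?_ ?_ ?_ ?_⟩ <;>
        grind [RemovableBead, AddableBead, slide]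
  · by_cases hip : i + 1 = p
    · refine ⟨_, _, .fst ?_ ?_, .of_eq (p := i) (q := i) (W := insert (i + 1) (W.erase i))
        ?_ ?_ ?_ ?_ ?_ ?_⟩ <;> grind [RemovableBead, AddableBead, slide]
    · refine ⟨_, _, .snd ?_ ?_, .of_eq (p := p) (q := i) (W := W) ?_ ?_ ?_ ?_ ?_ ?_⟩ <;>
        grind [RemovableBead, AddableBead, slide]

theorem Exchange.exists_move_symm {i : ℕ} {P Q P' Q' P₁' Q₁' : Finset ℕ}
    (h : Exchange P Q P' Q') (hmove : PairMove i P' Q' P₁' Q₁') :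
    ∃ P₁ Q₁, PairMove i P Q P₁ Q₁ ∧ Exchange P₁ Q₁ P₁' Q₁' := by
  obtain @⟨p, q, W, hpq, hW⟩ := h
  rcases hmove with ⟨hP, hQ⟩ | ⟨hQ, hP⟩ <;> simp only [RemovableBead, AddableBead] at hP hQ
  · by_cases hi : i ∈ W
    · refine ⟨_, _, .snd ?_ ?_, .of_eq (p := i) (q := i) (W := insert (i + 1) (W.erase i))
        ?_ ?_ ?_ ?_ ?_ ?_⟩ <;> grind [RemovableBead, AddableBead, slide]
    · refine ⟨_, _, .fst ?_ ?_, .of_eq (p := i) (q := q) (W := W) ?_ ?_ ?_ ?_ ?_ ?_⟩ <;>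
        grind [RemovableBead, AddableBead, slide]
  · by_cases hi : i + 1 ∈ W
    · refine ⟨_, _, .fst ?_ ?_, .of_eq (p := p) (q := q) (W := slide i W) ?_ ?_ ?_ ?_ ?_ ?_⟩ <;>
        grind [RemovableBead, AddableBead, slide]
    · refine ⟨_, _, .snd ?_ ?_, .of_eq (p := p) (q := i) (W := W) ?_ ?_ ?_ ?_ ?_ ?_⟩ <;>
        grind [RemovableBead, AddableBead, slide]

theorem Flush.eq_zero_of_singleton {p : ℕ} (h : Flush {p}) : p = 0 :=
  (mem_singleton.1 (h.mem_of_le (mem_singleton_self p) p.zero_le)).symm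

theorem Exchange.flush_iff {P Q P' Q' : Finset ℕ} (h : Exchange P Q P' Q') :
    Flush P ∧ Flush Q ↔ Flush P' ∧ Flush Q' := by
  obtain @⟨p, q, W, hpq, hW⟩ := h
  suffices hq : Flush {q} ∨ Flush {p} ∧ Flush (insert q W) → q = 0 by
    constructor
    · rintro ⟨hP, hQ⟩
      obtain rfl : q = 0 := hq (.inl hQ)
      obtain rfl : p = 0 := Nat.le_zero.1 hpq
      exact ⟨hQ, hP⟩
    · rintro ⟨hP', hQ'⟩
      obtain rfl : q = 0 := hq (.inr ⟨hP', hQ'⟩)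
      obtain rfl : p = 0 := Nat.le_zero.1 hpq
      exact ⟨hQ', hP'⟩
  rintro (hQ | ⟨hP', hQ'⟩)
  · exact hQ.eq_zero_of_singleton
  · have hp := hP'.eq_zero_of_singleton
    rcases mem_insert.1 (hQ'.mem_of_le (mem_insert_self q W) q.zero_le) with h | h
    · exact h.symm
    · have := hW 0 h
      omega

theorem isCrystalIso_exchange : IsCrystalIso Exchange where
  exists_move := Exchange.exists_move
  exists_move_symm := Exchange.exists_move_symm
  removable_iff i h := by
    obtain ⟨hpq, hW⟩ := h
    grind [RemovableBead]
  addable_iff i h := by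
    obtain ⟨hpq, hW⟩ := h
    grind [PairAddable, AddableBead, RemovableBead]
  flush_iff := Exchange.flush_iff

theorem Exchange.kleshchevTriple_fst_snd_iff {P Q R P' Q' : Finset ℕ} (h : Exchange P Q P' Q') :
    KleshchevTriple P Q R ↔ KleshchevTriple P' Q' R :=
  ⟨fun hK => isCrystalIso_exchange.kleshchevTriple_fst_snd hK h,
    fun hK => isCrystalIso_exchange.symm.kleshchevTriple_fst_snd hK h⟩

theorem Exchange.kleshchevTriple_snd_trd_iff {P Q R Q' R' : Finset ℕ} (h : Exchange Q R Q' R') :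
    KleshchevTriple P Q R ↔ KleshchevTriple P Q' R' :=
  ⟨fun hK => isCrystalIso_exchange.kleshchevTriple_snd_trd hK h,
    fun hK => isCrystalIso_exchange.symm.kleshchevTriple_snd_trd hK h⟩

/-! ### Dominance between nearly nested bead sets -/

theorem count_mem_sdiff_add_inter (P Q : Finset ℕ) (c : ℕ) :
    Nat.count (· ∈ P \ Q) c + Nat.count (· ∈ P ∩ Q) c = Nat.count (· ∈ P) c := by
  simp only [count_mem_eq_card_filter]
  rw [← card_union_of_disjoint
    (disjoint_filter_filter (disjoint_sdiff_inter P Q)), ← filter_union, sdiff_union_inter]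

theorem dominates_iff_sdiff {d : ℕ} {P Q : Finset ℕ} :
    Dominates d P Q ↔ Dominates d (P \ Q) (Q \ P) := by
  refine forall_congr' fun c => ?_
  rw [← count_mem_sdiff_add_inter P Q, ← count_mem_sdiff_add_inter Q P, inter_comm Q P]
  omega

theorem dominates_card_left (P Q : Finset ℕ) : Dominates Q.card P Q := fun c =>
  (count_mem_le_card Q c).trans (Nat.le_add_right _ _)

theorem dominates_empty_right (d : ℕ) (P : Finset ℕ) : Dominates d P ∅ := fun c =>
  (count_mem_le_card ∅ c).trans (by simp)

theorem count_mem_singleton (s c : ℕ) :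
    Nat.count (· ∈ ({s} : Finset ℕ)) c = if s < c then 1 else 0 := by
  rw [count_mem_eq_card_filter, filter_singleton]
  split_ifs <;> rfl

theorem dominates_singleton_left_iff {s : ℕ} {T : Finset ℕ} (hT : T.Nonempty) :
    Dominates (T.card - 1) {s} T ↔ ∃ t ∈ T, s ≤ t := by
  have hcard := hT.card_pos
  constructor
  · intro h
    by_contra! hlt
    have hs := h s
    rw [count_mem_singleton, count_mem_eq_card_filter, filter_true_of_mem hlt] at hs
    simp at hs
    omega
  · rintro ⟨t, ht, hst⟩ c
    rw [count_mem_singleton]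
    split_ifs with hc
    · have := count_mem_le_card T c
      omega
    · have := count_mem_lt_card ht (by omega : c ≤ t)
      omega

theorem dominates_singleton_right_iff {s : ℕ} {T : Finset ℕ} :
    Dominates 0 T {s} ↔ ∃ t ∈ T, t ≤ s := by
  simp only [Dominates, count_mem_singleton, zero_add]
  simp only [count_mem_eq_card_filter]
  constructor
  · intro h
    obtain ⟨t, ht⟩ := card_pos.1 (Nat.lt_of_lt_of_le (by simp) (h (s + 1)))
    rw [mem_filter] at ht
    exact ⟨t, ht.1, Nat.lt_succ_iff.1 ht.2⟩
  · rintro ⟨t, ht, hts⟩ c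
    split_ifs with hc
    · exact card_pos.2 ⟨t, mem_filter.2 ⟨ht, by omega⟩⟩
    · exact Nat.zero_le _

section Nested

variable {T N : Finset ℕ} {t : ℕ}

theorem dominates_of_subset (h : T ⊆ N) : Dominates (N.card - T.card) T N := by
  rw [dominates_iff_sdiff, ← card_sdiff_of_subset h]
  exact dominates_card_left _ _

theorem dominates_zero_of_subset (h : T ⊆ N) : Dominates 0 N T := by
  rw [dominates_iff_sdiff, sdiff_eq_empty_iff_subset.2 h]
  exact dominates_empty_right _ _

theorem card_sub_card_of_sdiff_eq_singleton (h : T \ N = {t}) :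
    N.card - T.card = (N \ T).card - 1 := by
  have hT := card_sdiff_add_card_inter T N
  have hN := card_sdiff_add_card_inter N T
  rw [h, card_singleton] at hT
  rw [inter_comm] at hN
  omega

theorem card_le_card_of_sdiff_eq_singleton (h : T \ N = {t}) (hN : (N \ T).Nonempty) :
    T.card ≤ N.card := by
  rw [← card_sdiff_le_card_sdiff_iff, h, card_singleton]
  exact hN.card_pos

theorem dominates_iff_of_sdiff_eq_singleton (h : T \ N = {t}) (hN : (N \ T).Nonempty) :
    Dominates (N.card - T.card) T N ↔ ∃ x ∈ N \ T, t ≤ x := by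
  rw [dominates_iff_sdiff, h, card_sub_card_of_sdiff_eq_singleton h,
    dominates_singleton_left_iff hN]

theorem dominates_zero_iff_of_sdiff_eq_singleton (h : T \ N = {t}) :
    Dominates 0 N T ↔ ∃ x ∈ N \ T, x ≤ t := by
  rw [dominates_iff_sdiff, h, dominates_singleton_right_iff]

end Nested

/-! ### Predicates invariant under the exchange -/

/-- The properties of the Kleshchev predicate on triples of rows that determine its values on
`D^u`. They are stated over an arbitrary linear order because, by `isExchangePredicate_reverse`,
they also hold when both the order and the rows are reversed. -/
structure IsExchangePredicate {α : Type*} [LinearOrder α]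
    (K : Finset α → Finset α → Finset α → Prop) : Prop where
  exchange_fst_snd {p q : α} {W R : Finset α} : p ≤ q → (∀ x ∈ W, x < p ∨ q < x) →
    (K (insert p W) {q} R ↔ K {p} (insert q W) R)
  exchange_snd_trd {p q : α} {P W : Finset α} : p ≤ q → (∀ x ∈ W, x < p ∨ q < x) →
    (K P (insert p W) {q} ↔ K P {p} (insert q W))
  exists_le_fst_of_snd {q : α} {P R : Finset α} : K P {q} R → P.Nonempty → ∃ p ∈ P, p ≤ q
  exists_le_snd_of_trd {q : α} {P Q : Finset α} : K P Q {q} → Q.Nonempty → ∃ p ∈ Q, p ≤ q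
  iff_of_subset {s : α} {T N : Finset α} : T.Nonempty → T ⊆ N → (K {s} T N ↔ ∃ t ∈ T, s ≤ t)
  iff_of_sdiff_eq_singleton {s t : α} {T N : Finset α} : T \ N = {t} → (N \ T).Nonempty →
    (K {s} T N ↔ (∃ t' ∈ T, s ≤ t') ∧ ∃ x ∈ N \ T, t ≤ x)

theorem nonempty_of_sdiff_eq_singleton {α : Type*} [DecidableEq α] {T N : Finset α} {t : α}
    (h : T \ N = {t}) : T.Nonempty :=
  ⟨t, (mem_sdiff.1 (h ▸ mem_singleton_self t)).1⟩

theorem isExchangePredicate_kleshchevTriple : IsExchangePredicate KleshchevTriple where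
  exchange_fst_snd hpq hW := (Exchange.intro hpq hW).kleshchevTriple_fst_snd_iff
  exchange_snd_trd hpq hW := (Exchange.intro hpq hW).kleshchevTriple_snd_trd_iff
  exists_le_fst_of_snd h hP :=
    dominates_singleton_right_iff.1 (h.dominates_fst_snd (by simpa using hP))
  exists_le_snd_of_trd h hQ :=
    dominates_singleton_right_iff.1 (h.dominates_snd_trd (by simpa using hQ))
  iff_of_subset hT hTN := by
    rw [kleshchevTriple_iff_of_card_le (by simpa using hT) (card_le_card hTN), card_singleton,
      dominates_singleton_left_iff hT, and_iff_left (dominates_of_subset hTN)]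
  iff_of_sdiff_eq_singleton h hN := by
    have hT := nonempty_of_sdiff_eq_singleton h
    rw [kleshchevTriple_iff_of_card_le (by simpa using hT)
      (card_le_card_of_sdiff_eq_singleton h hN), card_singleton, dominates_singleton_left_iff hT,
      dominates_iff_of_sdiff_eq_singleton h hN]

/-- The natural numbers with their order reversed. -/
abbrev reverseOrder : LinearOrder ℕ := inferInstanceAs (LinearOrder ℕᵒᵈ)

theorem isExchangePredicate_reverse :
    @IsExchangePredicate ℕ reverseOrder fun P Q R => KleshchevTriple R Q P := by
  refine @IsExchangePredicate.mk ℕ reverseOrder _ ?_ ?_ ?_ ?_ ?_ ?_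
  · intro p q W R (hpq : q ≤ p) (hW : ∀ x ∈ W, p < x ∨ x < q)
    exact (Exchange.intro hpq fun x hx => (hW x hx).symm).kleshchevTriple_snd_trd_iff.symm
  · intro p q P W (hpq : q ≤ p) (hW : ∀ x ∈ W, p < x ∨ x < q)
    exact (Exchange.intro hpq fun x hx => (hW x hx).symm).kleshchevTriple_fst_snd_iff.symm
  · intro q P R h hP
    exact (dominates_singleton_left_iff hP).1
      (h.dominates_snd_trd (by rw [card_singleton]; omega))
  · intro q P Q h hQ
    exact (dominates_singleton_left_iff hQ).1
      (h.dominates_fst_snd (by rw [card_singleton]; omega))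
  · intro s T N hT hTN
    change KleshchevTriple N T {s} ↔ ∃ t ∈ T, t ≤ s
    rw [kleshchevTriple_iff_of_le_card (card_le_card hTN) (by simpa using hT),
      dominates_singleton_right_iff, and_iff_right (dominates_zero_of_subset hTN)]
  · intro s t T N (h : T \ N = {t}) (hN : (N \ T).Nonempty)
    change KleshchevTriple N T {s} ↔ (∃ t' ∈ T, t' ≤ s) ∧ ∃ x ∈ N \ T, x ≤ t
    have hT := nonempty_of_sdiff_eq_singleton h
    rw [kleshchevTriple_iff_of_le_card (card_le_card_of_sdiff_eq_singleton h hN)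
      (by simpa using hT), dominates_singleton_right_iff,
      dominates_zero_iff_of_sdiff_eq_singleton h, and_comm]

/-! ### Evaluation on the block -/

theorem exists_predecessor {α : Type*} [LinearOrder α] {P : Finset α} {q : α}
    (h : ∃ p ∈ P, p ≤ q) : ∃ p ∈ P, p ≤ q ∧ ∀ x ∈ P, x ≤ q → x ≤ p := by
  have hne : {x ∈ P | x ≤ q}.Nonempty := h.imp fun _ => mem_filter.2
  obtain ⟨p, hp, hmax⟩ := exists_max_image _ id hne
  rw [mem_filter] at hp
  exact ⟨p, hp.1, hp.2, fun x hx hxq => hmax x (mem_filter.2 ⟨hx, hxq⟩)⟩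

theorem exists_le_mem_insert_erase_iff {α : Type*} [LinearOrder α] {P : Finset α} {p q : α} :
    (∃ x ∈ insert q (P.erase p), p ≤ x) ↔ p ≤ q ∨ ∃ x ∈ P, p < x := by
  simp only [exists_mem_insert, mem_erase]
  grind

namespace IsExchangePredicate

variable {α : Type*} [LinearOrder α] {K : Finset α → Finset α → Finset α → Prop}

theorem fst_snd_comm_of_mem (hK : IsExchangePredicate K) {q : α} {P R : Finset α} (hq : q ∈ P) :
    K P {q} R ↔ K {q} P R := by
  have h := hK.exchange_fst_snd (W := P.erase q) (R := R) le_rfl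
    fun x hx => (ne_of_mem_erase hx).lt_or_gt
  rwa [insert_erase hq] at h

theorem snd_trd_comm_of_mem (hK : IsExchangePredicate K) {q : α} {P Q : Finset α} (hq : q ∈ Q) :
    K P Q {q} ↔ K P {q} Q := by
  have h := hK.exchange_snd_trd (P := P) (W := Q.erase q) le_rfl
    fun x hx => (ne_of_mem_erase hx).lt_or_gt
  rwa [insert_erase hq] at h

theorem exists_predecessor_fst_snd (hK : IsExchangePredicate K) {q : α} {P : Finset α}
    (R : Finset α) (h : ∃ p ∈ P, p ≤ q) :
    ∃ p ∈ P, p ≤ q ∧ (∀ x ∈ P, x ≤ q → x ≤ p) ∧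
      (K P {q} R ↔ K {p} (insert q (P.erase p)) R) := by
  obtain ⟨p, hp, hpq, hmax⟩ := exists_predecessor h
  refine ⟨p, hp, hpq, hmax, ?_⟩
  rw [← hK.exchange_fst_snd hpq (by grind), insert_erase hp]

theorem exists_predecessor_snd_trd (hK : IsExchangePredicate K) {q : α} (P : Finset α)
    {Q : Finset α} (h : ∃ p ∈ Q, p ≤ q) :
    ∃ p ∈ Q, p ≤ q ∧ (∀ x ∈ Q, x ≤ q → x ≤ p) ∧
      (K P Q {q} ↔ K P {p} (insert q (Q.erase p))) := by
  obtain ⟨p, hp, hpq, hmax⟩ := exists_predecessor h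
  refine ⟨p, hp, hpq, hmax, ?_⟩
  rw [← hK.exchange_snd_trd hpq (by grind), insert_erase hp]

variable {A B : Finset α} {k l : α}

theorem singleton_core_large_alpha_iff (hK : IsExchangePredicate K) (hAB : Disjoint A B)
    (hk : k ∈ A) (hB : B.Nonempty) :
    K {k} A ((A ∪ B).erase k) ↔ ∃ b ∈ B, k < b := by
  have hdisj := disjoint_left.1 hAB
  have hcore : A \ (A ∪ B).erase k = {k} := by grind
  have hlarge : (A ∪ B).erase k \ A = B := by grind
  rw [hK.iff_of_sdiff_eq_singleton hcore (by rwa [hlarge]), hlarge,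
    and_iff_right ⟨k, hk, le_rfl⟩]
  grind

theorem singleton_core_large_beta_iff (hK : IsExchangePredicate K) (hAB : Disjoint A B)
    (hl : l ∈ B) (hA : A.Nonempty) :
    K {l} A ((A ∪ B).erase l) ↔ ∃ a ∈ A, l < a := by
  have hl_notMem := disjoint_right.1 hAB hl
  rw [hK.iff_of_subset hA (by grind)]
  grind

theorem singleton_core_large_gamma_iff (hK : IsExchangePredicate K) (hAB : Disjoint A B)
    (hk : k ∈ A) (hl : l ∈ B) :
    K {k} (insert l (A.erase k)) ((A ∪ B).erase l) ↔
      (k < l ∧ ∃ b ∈ B, l < b) ∨ (l < k ∧ ∃ a ∈ A, k < a) := by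
  have hdisj := disjoint_left.1 hAB
  have hcore : insert l (A.erase k) \ (A ∪ B).erase l = {l} := by grind
  have hlarge : (A ∪ B).erase l \ insert l (A.erase k) = insert k (B.erase l) := by
    grind
  rw [hK.iff_of_sdiff_eq_singleton hcore (by simp [hlarge]), hlarge]
  rw [exists_le_mem_insert_erase_iff, exists_le_mem_insert_erase_iff]
  grind

theorem core_singleton_large_alpha_iff (hK : IsExchangePredicate K) (hAB : Disjoint A B)
    (hk : k ∈ A) (hB : B.Nonempty) :
    K A {k} ((A ∪ B).erase k) ↔ ∃ b ∈ B, k < b := by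
  rw [hK.fst_snd_comm_of_mem hk, hK.singleton_core_large_alpha_iff hAB hk hB]

theorem core_singleton_large_beta_iff (hK : IsExchangePredicate K) (hAB : Disjoint A B)
    (hl : l ∈ B) (hA : A.Nonempty) :
    K A {l} ((A ∪ B).erase l) ↔ (∃ a ∈ A, a < l) ∧ ∃ b ∈ B, l < b := by
  have hl_notMem := disjoint_right.1 hAB hl
  by_cases hle : ∃ p ∈ A, p ≤ l
  · obtain ⟨p, hp, hpl, hmax, hiff⟩ := hK.exists_predecessor_fst_snd ((A ∪ B).erase l) hle
    rw [hiff, hK.singleton_core_large_gamma_iff hAB hp hl]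
    grind
  · have : ¬ K A {l} ((A ∪ B).erase l) := fun h => hle (hK.exists_le_fst_of_snd h hA)
    grind

theorem core_singleton_large_gamma_iff (hK : IsExchangePredicate K) (hAB : Disjoint A B)
    (hk : k ∈ A) (hl : l ∈ B) :
    K (insert l (A.erase k)) {k} ((A ∪ B).erase l) ↔
      l < k ∨ ((∃ a ∈ A, a < k) ∧ ∃ b ∈ B, l < b) := by
  have hl_notMem := disjoint_right.1 hAB hl
  have hkl := ne_of_mem_of_not_mem hk hl_notMem
  by_cases hle : ∃ p ∈ insert l (A.erase k), p ≤ k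
  · obtain ⟨p, hp, hpk, hmax, hiff⟩ := hK.exists_predecessor_fst_snd ((A ∪ B).erase l) hle
    rw [hiff]
    rcases eq_or_ne p l with rfl | hpl
    · rw [show insert k ((insert p (A.erase k)).erase p) = A by grind,
        hK.singleton_core_large_beta_iff hAB hl ⟨k, hk⟩]
      grind
    · rw [show insert k ((insert l (A.erase k)).erase p) = insert l (A.erase p) by grind,
        hK.singleton_core_large_gamma_iff hAB (by grind) hl]
      have hlp : l ≤ k → l ≤ p := hmax l (mem_insert_self _ _)
      grind
  · have : ¬ K (insert l (A.erase k)) {k} ((A ∪ B).erase l) := fun h =>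
      hle (hK.exists_le_fst_of_snd h (insert_nonempty _ _))
    simp only [exists_mem_insert, mem_erase] at hle
    grind

theorem core_large_singleton_iff (hK : IsExchangePredicate K) (hAB : Disjoint A B)
    (hA : A.Nonempty) (hB : B.Nonempty) {m : α} (hm : m ∈ A ∪ B) :
    K A ((A ∪ B).erase m) {m} ↔ (∃ a ∈ A, a < m) ∧ ∃ b ∈ B, m ≤ b := by
  have hdisj := disjoint_left.1 hAB
  by_cases hle : ∃ q ∈ (A ∪ B).erase m, q ≤ m
  · obtain ⟨q, hq, hqm, hmax, hiff⟩ := hK.exists_predecessor_snd_trd A hle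
    rw [hiff, show insert m (((A ∪ B).erase m).erase q) = (A ∪ B).erase q by grind]
    have hmaxA : ∀ a ∈ A, a < m → a ≤ q := fun a ha ham => hmax a (by grind) ham.le
    have hmaxB : ∀ b ∈ B, b < m → b ≤ q := fun b hb hbm => hmax b (by grind) hbm.le
    by_cases hqA : q ∈ A
    · rw [hK.core_singleton_large_alpha_iff hAB hqA hB]
      grind
    · rw [hK.core_singleton_large_beta_iff hAB (by grind) hA]
      grind
  · have hlarge : ((A ∪ B).erase m).Nonempty := by
      obtain ⟨a, ha⟩ := hA
      obtain ⟨b, hb⟩ := hB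
      have hab := ne_of_mem_of_not_mem ha (disjoint_right.1 hAB hb)
      exact (em (a = m)).elim (fun _ => ⟨b, by grind⟩) fun _ => ⟨a, by grind⟩
    have : ¬ K A ((A ∪ B).erase m) {m} := fun h => hle (hK.exists_le_snd_of_trd h hlarge)
    simp only [mem_erase, mem_union] at hle
    grind

theorem core_large_singleton_gamma_iff (hK : IsExchangePredicate K) (hAB : Disjoint A B)
    (hk : k ∈ A) (hl : l ∈ B) :
    K (insert l (A.erase k)) ((A ∪ B).erase l) {k} ↔
      l < k ∨ ((∃ a ∈ A, a < k) ∧ ∃ b ∈ B, l < b) := by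
  have hkl := ne_of_mem_of_not_mem hk (disjoint_right.1 hAB hl)
  rw [hK.snd_trd_comm_of_mem (mem_erase.2 ⟨hkl, mem_union_left _ hk⟩),
    hK.core_singleton_large_gamma_iff hAB hk hl]

end IsExchangePredicate

/-! ### Counting -/

/-- The triples of rows, listed as singleton row, core row, large row, of the matrices of a block
with core `A`: the first image collects the `α` and the `β`, the second one the `γ`. -/
def blockTriples {α : Type*} [DecidableEq α] (A B : Finset α) :
    Finset (Finset α × Finset α × Finset α) :=
  (A ∪ B).image (fun m => ({m}, A, (A ∪ B).erase m)) ∪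
    (A ×ˢ B).image fun p => ({p.1}, insert p.2 (A.erase p.1), (A ∪ B).erase p.2)

section BlockTriples

variable {α : Type*} [DecidableEq α] {A B : Finset α}

theorem card_filter_blockTriples (hAB : Disjoint A B)
    (F : Finset α → Finset α → Finset α → Prop) :
    #{t ∈ blockTriples A B | F t.1 t.2.1 t.2.2} =
      #{k ∈ A | F {k} A ((A ∪ B).erase k)} + #{l ∈ B | F {l} A ((A ∪ B).erase l)} +
        #{p ∈ A ×ˢ B | F {p.1} (insert p.2 (A.erase p.1)) ((A ∪ B).erase p.2)} := by
  have hdisj := disjoint_left.1 hAB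
  have hsingle : Function.Injective fun m => (({m} : Finset α), A, (A ∪ B).erase m) :=
    fun m n h => singleton_injective (congrArg Prod.fst h)
  have hpair : Set.InjOn (fun p : α × α =>
      (({p.1} : Finset α), insert p.2 (A.erase p.1), (A ∪ B).erase p.2)) (A ×ˢ B : Finset _) := by
    rintro ⟨k, l⟩ hkl ⟨k', l'⟩ hkl' h
    simp only [Prod.mk.injEq, singleton_inj, coe_product, Set.mem_prod, mem_coe] at h hkl hkl'
    obtain ⟨rfl, hcore, -⟩ := h
    have hl : l ∈ insert l' (A.erase k) := hcore ▸ mem_insert_self _ _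
    simp only [mem_insert, mem_erase] at hl
    grind
  have hcores : Disjoint ((A ∪ B).image fun m => (({m} : Finset α), A, (A ∪ B).erase m))
      ((A ×ˢ B).image fun p => ({p.1}, insert p.2 (A.erase p.1), (A ∪ B).erase p.2)) := by
    simp only [disjoint_left, mem_image, mem_product]
    rintro _ ⟨m, -, rfl⟩ ⟨p, hp, h⟩
    have hcore : insert p.2 (A.erase p.1) = A := congrArg (fun t => t.2.1) h
    exact hdisj (hcore ▸ mem_insert_self _ _) hp.2
  rw [blockTriples, filter_union, card_union_of_disjoint (disjoint_filter_filter hcores),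
    filter_image, filter_image, card_image_of_injective _ hsingle,
    card_image_of_injOn (hpair.mono (filter_subset _ _)), filter_union,
    card_union_of_disjoint (disjoint_filter_filter hAB)]

theorem card_blockTriples (hAB : Disjoint A B) : #(blockTriples A B) = #A + #B + #A * #B := by
  simpa using card_filter_blockTriples hAB fun _ _ _ => True

end BlockTriples

/-- The pairs failing `pc` form a cross through `(a, b)` whose arms are in bijection with the
elements satisfying `pa` and those satisfying `pb`. -/
theorem card_filter_add_card_filter_add_card_filter_of_cross {α : Type*} {A B : Finset α}
    {pa pb : α → Prop} {pc : α → α → Prop} {a b : α} (ha : a ∈ A) (hb : b ∈ B)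
    (hpc : ∀ k ∈ A, ∀ l ∈ B, ¬ pc k l ↔ (pa k ∧ l = b) ∨ (k = a ∧ pb l)) (hab : ¬ (pa a ∧ pb b)) :
    #{k ∈ A | pa k} + #{l ∈ B | pb l} + #{p ∈ A ×ˢ B | pc p.1 p.2} = #A * #B := by
  have hcross : {p ∈ A ×ˢ B | ¬ pc p.1 p.2} =
      {k ∈ A | pa k} ×ˢ {b} ∪ {a} ×ˢ {l ∈ B | pb l} := by
    ext ⟨k, l⟩
    simp only [mem_filter, mem_product, mem_union, mem_singleton]
    grind
  have hdisj : Disjoint ({k ∈ A | pa k} ×ˢ {b}) ({a} ×ˢ {l ∈ B | pb l}) := by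
    rw [disjoint_left]
    rintro ⟨k, l⟩
    simp only [mem_filter, mem_product, mem_singleton]
    grind
  rw [← card_product, ← card_filter_add_card_filter_not (s := A ×ˢ B) fun p => pc p.1 p.2, hcross,
    card_union_of_disjoint hdisj, card_product, card_product, card_singleton, card_singleton]
  ring

theorem card_filter_blockTriples_of_cross {α : Type*} [DecidableEq α] {A B : Finset α}
    (hAB : Disjoint A B) {F : Finset α → Finset α → Finset α → Prop} {a b : α} (ha : a ∈ A)
    (hb : b ∈ B)
    (hF : ∀ k ∈ A, ∀ l ∈ B, ¬ F {k} (insert l (A.erase k)) ((A ∪ B).erase l) ↔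
      (F {k} A ((A ∪ B).erase k) ∧ l = b) ∨ (k = a ∧ F {l} A ((A ∪ B).erase l)))
    (hab : ¬ (F {a} A ((A ∪ B).erase a) ∧ F {b} A ((A ∪ B).erase b))) :
    #{t ∈ blockTriples A B | F t.1 t.2.1 t.2.2} = #A * #B :=
  (card_filter_blockTriples hAB F).trans <|
    card_filter_add_card_filter_add_card_filter_of_cross
      (pc := fun k l => F {k} (insert l (A.erase k)) ((A ∪ B).erase l)) ha hb hF hab

section Extrema

variable {α : Type*} [LinearOrder α] (P : Finset α) (hP : P.Nonempty) {q : α}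

theorem exists_lt_iff_lt_max' : (∃ p ∈ P, q < p) ↔ q < P.max' hP :=
  (lt_isLUB_iff (P.isGreatest_max' hP).isLUB).symm

theorem exists_le_iff_le_max' : (∃ p ∈ P, q ≤ p) ↔ q ≤ P.max' hP :=
  ⟨fun ⟨p, hp, hqp⟩ => hqp.trans (P.le_max' p hp), fun h => ⟨_, P.max'_mem hP, h⟩⟩

theorem exists_lt_iff_min'_lt : (∃ p ∈ P, p < q) ↔ P.min' hP < q :=
  (isGLB_lt_iff (P.isLeast_min' hP).isGLB).symm

end Extrema

namespace IsExchangePredicate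

variable {α : Type*} [LinearOrder α] {K : Finset α → Finset α → Finset α → Prop} {A B : Finset α}

theorem card_filter_singleton_core_large (hK : IsExchangePredicate K) (hAB : Disjoint A B)
    (hA : A.Nonempty) (hB : B.Nonempty) :
    #{t ∈ blockTriples A B | K t.1 t.2.1 t.2.2} = #A * #B := by
  have hdisj := disjoint_left.1 hAB
  refine card_filter_blockTriples_of_cross (F := fun S T N => K S T N) hAB
    (A.max'_mem hA) (B.max'_mem hB) (fun k hk l hl => ?_) ?_
  · rw [hK.singleton_core_large_alpha_iff hAB hk hB, hK.singleton_core_large_beta_iff hAB hl hA,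
      hK.singleton_core_large_gamma_iff hAB hk hl]
    simp only [exists_lt_iff_lt_max' A hA, exists_lt_iff_lt_max' B hB]
    have hka := A.le_max' k hk
    have hlb := B.le_max' l hl
    grind
  · rw [hK.singleton_core_large_alpha_iff hAB (max'_mem _ _) hB,
      hK.singleton_core_large_beta_iff hAB (max'_mem _ _) hA, exists_lt_iff_lt_max' A hA,
      exists_lt_iff_lt_max' B hB]
    exact fun h => lt_asymm h.1 h.2

theorem card_filter_core_singleton_large (hK : IsExchangePredicate K) (hAB : Disjoint A B)
    (hA : A.Nonempty) (hB : B.Nonempty) :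
    #{t ∈ blockTriples A B | K t.2.1 t.1 t.2.2} = #A * #B := by
  have hdisj := disjoint_left.1 hAB
  refine card_filter_blockTriples_of_cross (F := fun S T N => K T S N) hAB
    (A.min'_mem hA) (B.max'_mem hB) (fun k hk l hl => ?_) ?_
  · rw [hK.core_singleton_large_alpha_iff hAB hk hB, hK.core_singleton_large_beta_iff hAB hl hA,
      hK.core_singleton_large_gamma_iff hAB hk hl]
    simp only [exists_lt_iff_min'_lt A hA, exists_lt_iff_lt_max' B hB]
    have hak := A.min'_le k hk
    have hlb := B.le_max' l hl
    grind
  · rw [hK.core_singleton_large_beta_iff hAB (max'_mem _ _) hA, exists_lt_iff_lt_max' B hB]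
    exact fun h => lt_irrefl _ h.2.2

theorem card_filter_core_large_singleton (hK : IsExchangePredicate K) (hAB : Disjoint A B)
    (hA : A.Nonempty) (hB : B.Nonempty) :
    #{t ∈ blockTriples A B | K t.2.1 t.2.2 t.1} = #A * #B := by
  have hdisj := disjoint_left.1 hAB
  refine card_filter_blockTriples_of_cross (F := fun S T N => K T N S) hAB
    (A.min'_mem hA) (B.max'_mem hB) (fun k hk l hl => ?_) ?_
  · rw [hK.core_large_singleton_iff hAB hA hB (mem_union_left _ hk),
      hK.core_large_singleton_iff hAB hA hB (mem_union_right _ hl),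
      hK.core_large_singleton_gamma_iff hAB hk hl]
    simp only [exists_lt_iff_min'_lt A hA, exists_le_iff_le_max' B hB, exists_lt_iff_lt_max' B hB]
    have hak := A.min'_le k hk
    have hlb := B.le_max' l hl
    grind
  · rw [hK.core_large_singleton_iff hAB hA hB (mem_union_left _ (min'_mem _ _)),
      exists_lt_iff_min'_lt A hA]
    exact fun h => lt_irrefl _ h.1.1

end IsExchangePredicate

/-- `KleshchevTriple` for a singleton row `S`, a core row `T` and a large row `N`, read from top to
bottom in the order in which the matrices of `D^u` have them. -/
def ArrangedKleshchev (u : Fin 6) (S T N : Finset ℕ) : Prop :=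
  ![KleshchevTriple S T N, KleshchevTriple N S T, KleshchevTriple T N S, KleshchevTriple T S N,
    KleshchevTriple S N T, KleshchevTriple N T S] u

theorem card_filter_arrangedKleshchev {A B : Finset ℕ} (hAB : Disjoint A B) (hA : A.Nonempty)
    (hB : B.Nonempty) (u : Fin 6) :
    #{t ∈ blockTriples A B | ArrangedKleshchev u t.1 t.2.1 t.2.2} = #A * #B := by
  have hK := isExchangePredicate_kleshchevTriple
  have hK' := isExchangePredicate_reverse
  match u with
  | 0 => exact hK.card_filter_singleton_core_large hAB hA hB
  | 1 =>
    exact @IsExchangePredicate.card_filter_core_singleton_large ℕ reverseOrder _ _ _ hK' hAB hA hB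
  | 2 => exact hK.card_filter_core_large_singleton hAB hA hB
  | 3 => exact hK.card_filter_core_singleton_large hAB hA hB
  | 4 =>
    exact @IsExchangePredicate.card_filter_core_large_singleton ℕ reverseOrder _ _ _ hK' hAB hA hB
  | 5 =>
    exact @IsExchangePredicate.card_filter_singleton_core_large ℕ reverseOrder _ _ _ hK' hAB hA hB

/-! ### Decreasing enumerations -/

section Enumeration

variable {T : Set ℤ}

theorem isGreatest_tEnum_zero (hT : BddAbove T) (hT' : ¬ BddBelow T) :
    IsGreatest T (tEnum T 0) := by
  have hne : T.Nonempty := Set.nonempty_iff_ne_empty.2 fun h => hT' (h ▸ bddBelow_empty)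
  exact ⟨Int.csSup_mem hne hT, fun z hz => le_csSup hT hz⟩

theorem isGreatest_tEnum_succ (hT : BddAbove T) (hT' : ¬ BddBelow T) (x : ℕ) :
    IsGreatest (T ∩ Set.Iio (tEnum T x)) (tEnum T (x + 1)) := by
  have hne : (T ∩ Set.Iio (tEnum T x)).Nonempty := by
    obtain ⟨z, hz, hzx⟩ := not_bddBelow_iff.1 hT' (tEnum T x)
    exact ⟨z, hz, hzx⟩
  have hbdd : BddAbove (T ∩ Set.Iio (tEnum T x)) := hT.mono Set.inter_subset_left
  exact ⟨Int.csSup_mem hne hbdd, fun z hz => le_csSup hbdd hz⟩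

theorem strictAnti_tEnum (hT : BddAbove T) (hT' : ¬ BddBelow T) : StrictAnti (tEnum T) :=
  strictAnti_nat_of_succ_lt fun x => (isGreatest_tEnum_succ hT hT' x).1.2

theorem tEnum_mem (hT : BddAbove T) (hT' : ¬ BddBelow T) : ∀ x, tEnum T x ∈ T
  | 0 => (isGreatest_tEnum_zero hT hT').1
  | x + 1 => (isGreatest_tEnum_succ hT hT' x).1.1

theorem range_tEnum (hT : BddAbove T) (hT' : ¬ BddBelow T) : Set.range (tEnum T) = T := by
  refine (Set.range_subset_iff.2 (tEnum_mem hT hT')).antisymm fun z hz => ?_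
  have hreach : ∃ x, tEnum T x ≤ z := by
    have hle : ∀ x : ℕ, tEnum T x ≤ tEnum T 0 - x := fun x => by
      induction x with
      | zero => simp
      | succ x ih =>
        have := strictAnti_tEnum hT hT' (lt_add_one x)
        push_cast
        omega
    exact ⟨(tEnum T 0 - z).toNat, (hle _).trans (by omega)⟩
  refine ⟨Nat.find hreach, (Nat.find_spec hreach).antisymm ?_⟩
  cases hx : Nat.find hreach with
  | zero => exact (isGreatest_tEnum_zero hT hT').2 hz
  | succ x =>
    have hlt : z < tEnum T x := not_le.1 (Nat.find_min hreach (hx ▸ x.lt_succ_self))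
    exact (isGreatest_tEnum_succ hT hT' x).2 ⟨hz, hlt⟩

theorem eq_tEnum (hT : BddAbove T) (hT' : ¬ BddBelow T) {f : ℕ → ℤ} (hf : StrictAnti f)
    (hfT : Set.range f = T) : f = tEnum T := by
  have hrange : Set.range (OrderDual.toDual ∘ f) = Set.range (OrderDual.toDual ∘ tEnum T) := by
    rw [Set.range_comp, Set.range_comp, hfT, range_tEnum hT hT']
  exact ((StrictMono.range_inj hf.dual_right (strictAnti_tEnum hT hT').dual_right).1 hrange)

theorem tEnum_sub_one_mem_iff (hT : BddAbove T) (hT' : ¬ BddBelow T) (x : ℕ) :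
    tEnum T x - 1 ∈ T ↔ tEnum T (x + 1) = tEnum T x - 1 := by
  have hnext := isGreatest_tEnum_succ hT hT' x
  refine ⟨fun h => le_antisymm ?_ (hnext.2 ⟨h, by simp⟩), fun h => h ▸ hnext.1.1⟩
  exact Int.le_sub_one_of_lt hnext.1.2

theorem tEnum_zero_add_one_notMem (hT : BddAbove T) (hT' : ¬ BddBelow T) :
    tEnum T 0 + 1 ∉ T := fun h => by
  have := (isGreatest_tEnum_zero hT hT').2 h
  omega

theorem tEnum_succ_add_one_mem_iff (hT : BddAbove T) (hT' : ¬ BddBelow T) (x : ℕ) :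
    tEnum T (x + 1) + 1 ∈ T ↔ tEnum T (x + 1) + 1 = tEnum T x := by
  have hnext := isGreatest_tEnum_succ hT hT' x
  refine ⟨fun h => ?_, fun h => h ▸ tEnum_mem hT hT' x⟩
  by_contra hne
  have hlt : tEnum T (x + 1) < tEnum T x := hnext.1.2
  have := hnext.2 ⟨h, Set.mem_Iio.2 (by omega)⟩
  omega

theorem image_tEnum_Iio (hT : BddAbove T) (hT' : ¬ BddBelow T) (x : ℕ) :
    tEnum T '' Set.Iio x = T ∩ Set.Ioi (tEnum T x) := by
  have hanti := strictAnti_tEnum hT hT'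
  ext z
  constructor
  · rintro ⟨w, hw, rfl⟩
    exact ⟨tEnum_mem hT hT' w, hanti hw⟩
  · rintro ⟨hz, hzx⟩
    rw [← range_tEnum hT hT'] at hz
    obtain ⟨w, rfl⟩ := hz
    exact ⟨w, hanti.lt_iff_gt.1 hzx, rfl⟩

theorem tEnum_insert_diff (hT : BddAbove T) (hT' : ¬ BddBelow T) {x : ℕ}
    (hx : tEnum T x - 1 ∉ T) :
    tEnum (insert (tEnum T x - 1) (T \ {tEnum T x})) =
      Function.update (tEnum T) x (tEnum T x - 1) := by
  have hanti := strictAnti_tEnum hT hT'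
  have hnext : tEnum T (x + 1) < tEnum T x - 1 := by
    have h₁ := hanti (lt_add_one x)
    have h₂ := mt (tEnum_sub_one_mem_iff hT hT' x).2 hx
    omega
  have hrange : Set.range (Function.update (tEnum T) x (tEnum T x - 1)) =
      insert (tEnum T x - 1) (T \ {tEnum T x}) := by
    refine (Set.range_subset_iff.2 fun w => ?_).antisymm (Set.insert_subset ⟨x, by simp⟩ ?_)
    · rcases eq_or_ne w x with rfl | hw
      · simp
      · simpa [hw] using Or.inr ⟨tEnum_mem hT hT' w, hanti.injective.ne hw⟩
    · rintro z ⟨hz, hzx⟩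
      rw [← range_tEnum hT hT'] at hz
      obtain ⟨w, rfl⟩ := hz
      exact ⟨w, Function.update_of_ne (ne_of_apply_ne _ hzx) _ _⟩
  refine (eq_tEnum ((hT.mono Set.sdiff_subset).insert _) ?_
    (strictAnti_nat_of_succ_lt fun w => ?_) hrange).symm
  · rw [bddBelow_insert]
    refine fun h => hT' ((h.insert (tEnum T x)).mono ?_)
    rw [Set.insert_sdiff_singleton]
    exact Set.subset_insert _ _
  · have hw := hanti (lt_add_one w)
    simp only [Function.update_apply]
    split_ifs <;> first | omega | (subst_vars; omega)

end Enumeration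

/-! ### Partitions of bead sets -/

/-- The β-set of the partition attached to a finite set `P` of beads on the nonnegative positions
of a single-runner abacus: all the negative positions are filled. -/
def betaSet (P : Finset ℕ) : Set ℤ := {z | z < 0 ∨ z.toNat ∈ P}

/-- The partition whose β-set is `betaSet P`, as a sequence of parts indexed from `0`. -/
def parts (P : Finset ℕ) (x : ℕ) : ℕ := (tEnum (betaSet P) x + (x + 1) - #P).toNat

section BetaSet

variable {P : Finset ℕ}

theorem natCast_mem_betaSet {n : ℕ} : (n : ℤ) ∈ betaSet P ↔ n ∈ P := by
  simp [betaSet]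

theorem mem_betaSet_of_neg {z : ℤ} (hz : z < 0) : z ∈ betaSet P := Or.inl hz

theorem bddAbove_betaSet : BddAbove (betaSet P) := by
  refine ⟨(P.sup id : ℕ), fun z hz => ?_⟩
  rcases hz with hz | hz
  · omega
  · have : z.toNat ≤ P.sup id := le_sup (f := id) hz
    omega

theorem not_bddBelow_betaSet : ¬ BddBelow (betaSet P) :=
  not_bddBelow_iff.2 fun z => ⟨min z 0 - 1, mem_betaSet_of_neg (by omega), by omega⟩

theorem betaSet_inter_Ioi (z : ℤ) :
    betaSet P ∩ Set.Ioi z = ↑({n ∈ P | z < (n : ℕ)}.map Nat.castEmbedding ∪ Ioo z 0) := by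
  ext w
  simp only [betaSet, Set.mem_inter_iff, Set.mem_ofPred_eq, Set.mem_Ioi, coe_union, coe_map,
    coe_filter, Set.mem_union, Set.mem_image, coe_Ioo, Set.mem_Ioo, Nat.castEmbedding_apply]
  constructor
  · rintro ⟨hw, hzw⟩
    rcases lt_or_ge w 0 with hw0 | hw0
    · exact Or.inr ⟨hzw, hw0⟩
    · exact Or.inl ⟨w.toNat, ⟨hw.resolve_left hw0.not_gt, by omega⟩, by omega⟩
  · rintro (⟨n, ⟨hn, hzn⟩, rfl⟩ | ⟨hzw, hw⟩)
    · exact ⟨Or.inr (by simpa using hn), hzn⟩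
    · exact ⟨Or.inl hw, hzw⟩

theorem ncard_betaSet_inter_Ioi (z : ℤ) :
    (betaSet P ∩ Set.Ioi z).ncard = #{n ∈ P | z < (n : ℕ)} + (0 - z - 1).toNat := by
  rw [betaSet_inter_Ioi, Set.ncard_coe_finset, card_union_of_disjoint, card_map, Int.card_Ioo]
  rw [Finset.disjoint_left]
  intro w hw hw'
  obtain ⟨n, -, rfl⟩ := mem_map.1 hw
  exact absurd (mem_Ioo.1 hw').2 (Int.natCast_nonneg n).not_gt

theorem tEnum_betaSet_injective : Function.Injective (tEnum (betaSet P)) :=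
  (strictAnti_tEnum bddAbove_betaSet not_bddBelow_betaSet).injective

theorem card_le_tEnum_add (x : ℕ) : (#P : ℤ) ≤ tEnum (betaSet P) x + (x + 1) := by
  have habove : (betaSet P ∩ Set.Ioi (tEnum (betaSet P) x)).ncard = x := by
    rw [← image_tEnum_Iio bddAbove_betaSet not_bddBelow_betaSet,
      Set.ncard_image_of_injective _ tEnum_betaSet_injective]
    simp [Set.ncard_eq_toFinset_card']
  rw [ncard_betaSet_inter_Ioi] at habove
  generalize tEnum (betaSet P) x = z at habove ⊢
  have hsplit := card_filter_add_card_filter_not (s := P) fun n => z < (n : ℕ)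
  have hbelow : #{n ∈ P | ¬ z < (n : ℕ)} ≤ (z + 1).toNat := by
    rw [← card_range (z + 1).toNat]
    refine card_le_card fun n hn => ?_
    have := (mem_filter.1 hn).2
    rw [mem_range]
    omega
  omega

theorem natCast_parts (x : ℕ) : (parts P x : ℤ) = tEnum (betaSet P) x + (x + 1) - #P := by
  have := card_le_tEnum_add (P := P) x
  rw [parts, Int.toNat_of_nonneg (by omega)]

theorem parts_succ_lt_iff (x : ℕ) :
    parts P (x + 1) < parts P x ↔ tEnum (betaSet P) x - 1 ∉ betaSet P := by
  rw [tEnum_sub_one_mem_iff bddAbove_betaSet not_bddBelow_betaSet]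
  have := natCast_parts (P := P) x
  have := natCast_parts (P := P) (x + 1)
  have := strictAnti_tEnum (T := betaSet P) bddAbove_betaSet not_bddBelow_betaSet (lt_add_one x)
  omega

theorem eq_zero_or_parts_lt_iff (x : ℕ) :
    (x = 0 ∨ parts P x < parts P (x - 1)) ↔ tEnum (betaSet P) x + 1 ∉ betaSet P := by
  cases x with
  | zero => simpa using tEnum_zero_add_one_notMem bddAbove_betaSet not_bddBelow_betaSet
  | succ x =>
    rw [tEnum_succ_add_one_mem_iff bddAbove_betaSet not_bddBelow_betaSet]
    have := natCast_parts (P := P) x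
    have := natCast_parts (P := P) (x + 1)
    have := strictAnti_tEnum (T := betaSet P) bddAbove_betaSet not_bddBelow_betaSet (lt_add_one x)
    simp only [Nat.add_sub_cancel]
    omega

theorem betaSet_slide {i : ℕ} :
    betaSet (slide i P) = insert (i : ℤ) (betaSet P \ {(i : ℤ) + 1}) := by
  ext z
  simp only [betaSet, Set.mem_ofPred_eq, mem_slide, Set.mem_insert_iff, Set.mem_sdiff,
    Set.mem_singleton_iff]
  grind

theorem parts_slide {i x : ℕ} (h : RemovableBead i P) (hx : tEnum (betaSet P) x = i + 1) :
    parts (slide i P) = Function.update (parts P) x (parts P x - 1) := by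
  have hgap : tEnum (betaSet P) x - 1 ∉ betaSet P := by
    rw [hx, add_sub_cancel_right, natCast_mem_betaSet]
    exact h.2
  have henum := tEnum_insert_diff bddAbove_betaSet not_bddBelow_betaSet hgap
  rw [hx, add_sub_cancel_right, ← betaSet_slide] at henum
  funext w
  simp only [parts, card_slide h, henum, Function.update_apply]
  split_ifs with hw
  · subst hw
    rw [hx]
    omega
  · rfl

theorem flush_iff_parts_eq_zero : Flush P ↔ parts P = 0 := by
  constructor
  · intro hP
    have hanti : StrictAnti fun x : ℕ => (#P : ℤ) - 1 - x := fun x w hxw => by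
      simpa using hxw
    have henum := eq_tEnum (T := betaSet P) bddAbove_betaSet not_bddBelow_betaSet hanti (by
      ext z
      simp only [Set.mem_range, betaSet, Set.mem_ofPred_eq, hP.mem_iff]
      exact ⟨by rintro ⟨x, rfl⟩; omega, fun hz => ⟨(#P - 1 - z).toNat, by omega⟩⟩)
    funext x
    simp only [parts, ← henum, Pi.zero_apply]
    omega
  · intro hP i hi
    obtain ⟨x, hx⟩ : ((i + 1 : ℕ) : ℤ) ∈ Set.range (tEnum (betaSet P)) := by
      rw [range_tEnum bddAbove_betaSet not_bddBelow_betaSet, natCast_mem_betaSet]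
      exact hi.1
    have hlt : parts P (x + 1) < parts P x := by
      rw [parts_succ_lt_iff, hx, Nat.cast_succ, add_sub_cancel_right, natCast_mem_betaSet]
      exact hi.2
    simp [hP] at hlt

end BetaSet

/-! ### Nodes of a fixed residue -/

/-- Row `s` is normal, for a configuration with at most one removable (`rem`) or addable (`add`)
node of the given residue in each row. -/
def RowNormal {r : ℕ} (rem add : Fin r → Prop) (s : Fin r) : Prop :=
  rem s ∧ ∀ t, s < t → add t → #{c ∈ Ioo s t | add c} < #{c ∈ Ioo s t | rem c}

/-- Row `s` is good: it is the highest normal row. -/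
def RowGood {r : ℕ} (rem add : Fin r → Prop) (s : Fin r) : Prop :=
  RowNormal rem add s ∧ ∀ t < s, ¬ RowNormal rem add t

/-- The nodes of residue `ρ` of the multipartition `lam` are one removable node `remNode s` in each
component `s` with `rem s` and one addable node `addNode s` in each component `s` with `add s`,
and no component has both. -/
structure HasSignature {e r : ℕ} (a : Fin r → ZMod e) (lam : Fin r → ℕ → ℕ) (ρ : ZMod e)
    (rem add : Fin r → Prop) (remNode addNode : Fin r → ℕ × ℕ) : Prop where
  removable_iff : ∀ C, Removable lam C ∧ res a C = ρ ↔ rem C.1 ∧ C.2 = remNode C.1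
  addable_iff : ∀ C, Addable lam C ∧ res a C = ρ ↔ add C.1 ∧ C.2 = addNode C.1
  not_add_of_rem : ∀ s, rem s → ¬ add s

section HasSignature

variable {e r : ℕ} {a : Fin r → ZMod e} {lam : Fin r → ℕ → ℕ} {ρ : ZMod e}
  {rem add : Fin r → Prop} {remNode addNode : Fin r → ℕ × ℕ}

theorem nodeAbove_iff_of_ne {A B : Node r} (h : A.1 ≠ B.1) : NodeAbove A B ↔ A.1 < B.1 := by
  simp [NodeAbove, h]

theorem nodeAbove_irrefl (A : Node r) : ¬ NodeAbove A A := by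
  simp [NodeAbove]

theorem nodeAbove_and_nodeAbove_iff {A B C : Node r} (hA : A.1 = C.1 → A = C)
    (hB : C.1 = B.1 → C = B) : NodeAbove A C ∧ NodeAbove C B ↔ C.1 ∈ Ioo A.1 B.1 := by
  rw [mem_Ioo]
  refine and_congr ?_ ?_
  · by_cases h : A.1 = C.1
    · simp [hA h, nodeAbove_irrefl]
    · exact nodeAbove_iff_of_ne h
  · by_cases h : C.1 = B.1
    · simp [hB h, nodeAbove_irrefl]
    · exact nodeAbove_iff_of_ne h

theorem ncard_nodes_eq_card_filter {p : Node r → Prop} {q : Fin r → Prop} {I : Finset (Fin r)}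
    {node : Fin r → ℕ × ℕ} (h : ∀ C, p C ↔ C.1 ∈ I ∧ q C.1 ∧ C.2 = node C.1) :
    {C | p C}.ncard = #{c ∈ I | q c} := by
  have himage : {C | p C} = (fun c => (c, node c)) '' ({c ∈ I | q c} : Finset (Fin r)) := by
    ext ⟨c, n⟩
    simp only [Set.mem_ofPred_eq, h, coe_filter, Set.mem_image, Prod.mk.injEq]
    exact ⟨fun ⟨hI, hq, hn⟩ => ⟨c, ⟨hI, hq⟩, rfl, hn.symm⟩,
      by rintro ⟨_, ⟨hI, hq⟩, rfl, rfl⟩; exact ⟨hI, hq, rfl⟩⟩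
  rw [himage, Set.ncard_image_of_injective _ fun c d h => congrArg Prod.fst h,
    Set.ncard_coe_finset]

namespace HasSignature

theorem ncard_addable_between (h : HasSignature a lam ρ rem add remNode addNode) {s t : Fin r}
    (hs : rem s) :
    {C | Addable lam C ∧ res a C = ρ ∧ NodeAbove (s, remNode s) C ∧
      NodeAbove C (t, addNode t)}.ncard = #{c ∈ Ioo s t | add c} := by
  refine ncard_nodes_eq_card_filter (node := addNode) fun ⟨c, n⟩ => ?_
  rw [← and_assoc, h.addable_iff, and_comm]
  refine and_congr_left fun ⟨(hc : add c), (hn : n = addNode c)⟩ =>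
    nodeAbove_and_nodeAbove_iff (fun (hsc : s = c) => ?_) fun (hct : c = t) => ?_
  · exact absurd (hsc ▸ hc) (h.not_add_of_rem s hs)
  · rw [hn, hct]

theorem ncard_removable_between (h : HasSignature a lam ρ rem add remNode addNode) {s t : Fin r}
    (ht : add t) :
    {C | Removable lam C ∧ res a C = ρ ∧ NodeAbove (s, remNode s) C ∧
      NodeAbove C (t, addNode t)}.ncard = #{c ∈ Ioo s t | rem c} := by
  refine ncard_nodes_eq_card_filter (node := remNode) fun ⟨c, n⟩ => ?_
  rw [← and_assoc, h.removable_iff, and_comm]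
  refine and_congr_left fun ⟨(hc : rem c), (hn : n = remNode c)⟩ =>
    nodeAbove_and_nodeAbove_iff (fun (hsc : s = c) => ?_) fun (hct : c = t) => ?_
  · rw [hn, hsc]
  · exact absurd (hct ▸ ht) (h.not_add_of_rem c hc)

theorem normal_iff (h : HasSignature a lam ρ rem add remNode addNode) (A : Node r) :
    Normal a lam A ∧ res a A = ρ ↔ RowNormal rem add A.1 ∧ A.2 = remNode A.1 := by
  obtain ⟨s, n⟩ := A
  rw [Normal, RowNormal, and_right_comm, h.removable_iff]
  refine (and_congr_right fun ⟨hs, hn⟩ => ?_).trans and_right_comm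
  dsimp only at hs hn ⊢
  subst hn
  have hres : res a (s, remNode s) = ρ := ((h.removable_iff (s, remNode s)).2 ⟨hs, rfl⟩).2
  rw [hres]
  constructor
  · intro hnormal t hst ht
    obtain ⟨hadd, hres'⟩ := (h.addable_iff (t, addNode t)).2 ⟨ht, rfl⟩
    have := hnormal _ hadd hres' (Or.inl hst)
    rwa [h.ncard_addable_between hs, h.ncard_removable_between ht] at this
  · rintro hnormal ⟨t, m⟩ hadd hres' habove
    obtain ⟨ht, hm⟩ := (h.addable_iff (t, m)).1 ⟨hadd, hres'⟩
    dsimp only at ht hm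
    subst hm
    have hst : s ≠ t := fun hst => h.not_add_of_rem s hs (hst ▸ ht)
    rw [h.ncard_addable_between hs, h.ncard_removable_between ht]
    exact hnormal t ((nodeAbove_iff_of_ne hst).1 habove) ht

theorem good_iff (h : HasSignature a lam ρ rem add remNode addNode) (A : Node r) :
    Good a lam A ∧ res a A = ρ ↔ RowGood rem add A.1 ∧ A.2 = remNode A.1 := by
  rw [Good, RowGood, and_right_comm, h.normal_iff]
  refine (and_congr_right fun ⟨hs, hn⟩ => ?_).trans and_right_comm
  have hres : res a A = ρ := ((h.normal_iff A).2 ⟨hs, hn⟩).2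
  rw [hres]
  constructor
  · intro hgood t hts ht
    obtain ⟨hnormal, hres'⟩ := (h.normal_iff (t, remNode t)).2 ⟨ht, rfl⟩
    have hne : t ≠ A.1 := hts.ne
    have habove := hgood _ hnormal hres' fun h => hne (congrArg Prod.fst h)
    exact hts.not_gt ((nodeAbove_iff_of_ne hne.symm).1 habove)
  · intro hgood B hnormal hres' hne
    obtain ⟨hB, hBn⟩ := (h.normal_iff B).1 ⟨hnormal, hres'⟩
    have hAB : A.1 ≠ B.1 := fun hAB => hne (Prod.ext hAB.symm (by rw [hBn, hn, hAB]))
    exact Or.inl (lt_of_le_of_ne (not_lt.1 fun hlt => hgood _ hlt hB) hAB)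

end HasSignature

end HasSignature

/-! ### Nodes of a bead configuration -/

/-- The index of the part of the partition of `P` that corresponds to the bead `z`; a junk value
if `z` is not in `betaSet P`. -/
def partIndex (P : Finset ℕ) (z : ℤ) : ℕ := Function.invFun (tEnum (betaSet P)) z

/-- Row and column of the node removed by sliding the bead at `i + 1` of `P` down to `i`. -/
def removableNode (i : ℕ) (P : Finset ℕ) : ℕ × ℕ :=
  (partIndex P (i + 1), parts P (partIndex P (i + 1)) - 1)

/-- Row and column of the node added by sliding the bead at `i` of `P` up to `i + 1`. -/
def addableNode (i : ℕ) (P : Finset ℕ) : ℕ × ℕ := (partIndex P i, parts P (partIndex P i))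

section BeadConfiguration

variable {e r : ℕ} {R : Fin r → Finset ℕ}

theorem tEnum_partIndex {P : Finset ℕ} {z : ℤ} (hz : z ∈ betaSet P) :
    tEnum (betaSet P) (partIndex P z) = z := by
  rw [← range_tEnum bddAbove_betaSet not_bddBelow_betaSet] at hz
  exact Function.invFun_eq hz

theorem partIndex_tEnum {P : Finset ℕ} (x : ℕ) : partIndex P (tEnum (betaSet P) x) = x :=
  Function.leftInverse_invFun tEnum_betaSet_injective x

theorem removable_parts_iff {s : Fin r} {x y : ℕ} :
    Removable (fun s => parts (R s)) (s, x, y) ↔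
      tEnum (betaSet (R s)) x - 1 ∉ betaSet (R s) ∧ y + 1 = parts (R s) x := by
  rw [Removable, parts_succ_lt_iff, and_comm]

theorem addable_parts_iff {s : Fin r} {x y : ℕ} :
    Addable (fun s => parts (R s)) (s, x, y) ↔
      tEnum (betaSet (R s)) x + 1 ∉ betaSet (R s) ∧ y = parts (R s) x := by
  rw [Addable, eq_zero_or_parts_lt_iff, and_comm]

theorem res_of_eq {s : Fin r} {x y : ℕ} {z : ℤ} (hy : (y : ℤ) = z + x - #(R s)) :
    res (fun s => (#(R s) : ZMod e)) (s, x, y) = z := by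
  have hz : z = #(R s) - x + y := by omega
  rw [res, hz]
  push_cast
  rfl

theorem res_of_removable {s : Fin r} {x y : ℕ} (h : Removable (fun s => parts (R s)) (s, x, y)) :
    res (fun s => (#(R s) : ZMod e)) (s, x, y) = (tEnum (betaSet (R s)) x : ℤ) := by
  have := (removable_parts_iff.1 h).2
  have := natCast_parts (P := R s) x
  exact res_of_eq (by omega)

theorem res_of_addable {s : Fin r} {x y : ℕ} (h : Addable (fun s => parts (R s)) (s, x, y)) :
    res (fun s => (#(R s) : ZMod e)) (s, x, y) = (tEnum (betaSet (R s)) x + 1 : ℤ) := by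
  have := (addable_parts_iff.1 h).2
  have := natCast_parts (P := R s) x
  exact res_of_eq (by omega)

theorem eq_of_intCast_eq_natCast {z : ℤ} {n : ℕ} (hz : 0 ≤ z) (hze : z ≤ e) (hn : 0 < n)
    (hne : n < e) (h : (z : ZMod e) = n) : z = n := by
  have hdvd : (e : ℤ) ∣ n - z := by
    rw [← ZMod.intCast_eq_intCast_iff_dvd_sub, h, Int.cast_natCast]
  have := Int.eq_zero_of_abs_lt_dvd hdvd (abs_lt.2 (by omega))
  omega

theorem lt_of_mem_betaSet {P : Finset ℕ} (hP : P ⊆ range e) {z : ℤ} (hz : z ∈ betaSet P) :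
    z < e := by
  rcases hz with hz | hz
  · omega
  · have := mem_range.1 (hP hz)
    omega

theorem nonneg_of_notMem_betaSet {P : Finset ℕ} {z : ℤ} (hz : z ∉ betaSet P) : 0 ≤ z :=
  not_lt.1 fun h => hz (mem_betaSet_of_neg h)

theorem removable_and_res_iff (hR : ∀ s, R s ⊆ range e) {i : ℕ} (hi : i + 1 < e) (C : Node r) :
    Removable (fun s => parts (R s)) C ∧
      res (fun s => (#(R s) : ZMod e)) C = ((i + 1 : ℕ) : ZMod e) ↔
    RemovableBead i (R C.1) ∧ C.2 = removableNode i (R C.1) := by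
  obtain ⟨s, x, y⟩ := C
  dsimp only
  have hmem := tEnum_mem (T := betaSet (R s)) bddAbove_betaSet not_bddBelow_betaSet x
  constructor
  · rintro ⟨hrem, hres⟩
    rw [res_of_removable hrem] at hres
    obtain ⟨hgap, hy⟩ := removable_parts_iff.1 hrem
    have hpos := nonneg_of_notMem_betaSet hgap
    have hlt := lt_of_mem_betaSet (hR s) hmem
    have hz := eq_of_intCast_eq_natCast (by omega) hlt.le i.succ_pos hi hres
    have hx : x = partIndex (R s) (i + 1) := by
      rw [← Nat.cast_succ, ← hz, partIndex_tEnum]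
    rw [hz, natCast_mem_betaSet] at hmem
    rw [hz, Nat.cast_succ, add_sub_cancel_right, natCast_mem_betaSet] at hgap
    exact ⟨⟨hmem, hgap⟩, Prod.ext hx (by rw [removableNode, ← hx]; omega)⟩
  · rintro ⟨hbead, hnode⟩
    obtain ⟨hx, hy⟩ := Prod.mk.inj hnode
    rw [← hx] at hy
    have hz : tEnum (betaSet (R s)) x = ((i + 1 : ℕ) : ℤ) := by
      rw [hx]
      exact tEnum_partIndex (natCast_mem_betaSet.2 hbead.1)
    have hgap : tEnum (betaSet (R s)) x - 1 ∉ betaSet (R s) := by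
      rw [hz, Nat.cast_succ, add_sub_cancel_right, natCast_mem_betaSet]
      exact hbead.2
    have hlt := (parts_succ_lt_iff x).2 hgap
    have hrem := removable_parts_iff.2 ⟨hgap, (by omega : y + 1 = parts (R s) x)⟩
    exact ⟨hrem, by rw [res_of_removable hrem, hz, Int.cast_natCast]⟩

theorem addable_and_res_iff (hR : ∀ s, R s ⊆ range e) {i : ℕ} (hi : i + 1 < e) (C : Node r) :
    Addable (fun s => parts (R s)) C ∧
      res (fun s => (#(R s) : ZMod e)) C = ((i + 1 : ℕ) : ZMod e) ↔
    AddableBead i (R C.1) ∧ C.2 = addableNode i (R C.1) := by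
  obtain ⟨s, x, y⟩ := C
  dsimp only
  have hmem := tEnum_mem (T := betaSet (R s)) bddAbove_betaSet not_bddBelow_betaSet x
  constructor
  · rintro ⟨hadd, hres⟩
    rw [res_of_addable hadd] at hres
    obtain ⟨hgap, hy⟩ := addable_parts_iff.1 hadd
    have hpos := nonneg_of_notMem_betaSet hgap
    have hlt := lt_of_mem_betaSet (hR s) hmem
    have hz : tEnum (betaSet (R s)) x = i := by
      have := eq_of_intCast_eq_natCast hpos (by omega) i.succ_pos hi hres
      omega
    have hx : x = partIndex (R s) i := by rw [← hz, partIndex_tEnum]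
    rw [hz, natCast_mem_betaSet] at hmem
    rw [hz, ← Nat.cast_succ, natCast_mem_betaSet] at hgap
    exact ⟨⟨hmem, hgap⟩, Prod.ext hx (by rw [addableNode, ← hx]; exact hy)⟩
  · rintro ⟨hbead, hnode⟩
    obtain ⟨hx, hy⟩ := Prod.mk.inj hnode
    rw [← hx] at hy
    have hz : tEnum (betaSet (R s)) x = i := by
      rw [hx]
      exact tEnum_partIndex (natCast_mem_betaSet.2 hbead.1)
    have hgap : tEnum (betaSet (R s)) x + 1 ∉ betaSet (R s) := by
      rw [hz, ← Nat.cast_succ, natCast_mem_betaSet]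
      exact hbead.2
    have hadd := addable_parts_iff.2 ⟨hgap, hy⟩
    exact ⟨hadd, by rw [res_of_addable hadd, hz]; push_cast; rfl⟩

theorem hasSignature_beads (hR : ∀ s, R s ⊆ range e) {i : ℕ} (hi : i + 1 < e) :
    HasSignature (fun s => (#(R s) : ZMod e)) (fun s => parts (R s)) ((i + 1 : ℕ) : ZMod e)
      (fun s => RemovableBead i (R s)) (fun s => AddableBead i (R s))
      (fun s => removableNode i (R s)) (fun s => addableNode i (R s)) where
  removable_iff := removable_and_res_iff hR hi
  addable_iff := addable_and_res_iff hR hi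
  not_add_of_rem _ := RemovableBead.not_addable

theorem exists_res_eq_of_removable (hR : ∀ s, R s ⊆ range e) {C : Node r}
    (h : Removable (fun s => parts (R s)) C) :
    ∃ i, i + 1 < e ∧ res (fun s => (#(R s) : ZMod e)) C = ((i + 1 : ℕ) : ZMod e) := by
  obtain ⟨s, x, y⟩ := C
  have hpos := nonneg_of_notMem_betaSet (removable_parts_iff.1 h).1
  have hlt := lt_of_mem_betaSet (hR s) (tEnum_mem bddAbove_betaSet not_bddBelow_betaSet x)
  obtain ⟨i, hi⟩ := Int.eq_ofNat_of_zero_le hpos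
  have hz : tEnum (betaSet (R s)) x = ((i + 1 : ℕ) : ℤ) := by omega
  exact ⟨i, by omega, by rw [res_of_removable h, hz, Int.cast_natCast]⟩

end BeadConfiguration

/-! ### Kleshchev multipartitions as bead configurations -/

/-- The bead configurations that reach a flush configuration by sliding good beads: the abacus form
of Kleshchev `r`-multipartitions. -/
inductive RowKleshchev {r : ℕ} : (Fin r → Finset ℕ) → Prop
  | flush {R : Fin r → Finset ℕ} (h : ∀ s, Flush (R s)) : RowKleshchev R
  | slide {R : Fin r → Finset ℕ} {i : ℕ} {s : Fin r}
      (h : RowGood (fun t => RemovableBead i (R t)) (fun t => AddableBead i (R t)) s)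
      (h' : RowKleshchev (Function.update R s (slide i (R s)))) : RowKleshchev R

section RowKleshchev

variable {e r : ℕ} {R : Fin r → Finset ℕ} {s : Fin r} {i : ℕ}

theorem removeNode_removableNode (h : RemovableBead i (R s)) :
    removeNode (fun t => parts (R t)) (s, removableNode i (R s)) =
      fun t => parts (Function.update R s (slide i (R s)) t) := by
  have hx : tEnum (betaSet (R s)) (partIndex (R s) (i + 1)) = i + 1 :=
    tEnum_partIndex (natCast_mem_betaSet.2 h.1)
  funext t x
  rcases eq_or_ne t s with rfl | hts
  · rw [Function.update_self, parts_slide h hx]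
    simp only [removeNode, removableNode, true_and, Function.update_apply]
    split_ifs with hxi
    · rw [hxi]
    · rfl
  · simp [removeNode, hts]

theorem card_update_slide (h : RemovableBead i (R s)) (t : Fin r) :
    #(Function.update R s (slide i (R s)) t) = #(R t) := by
  rcases eq_or_ne t s with rfl | hts
  · rw [Function.update_self, card_slide h]
  · rw [Function.update_of_ne hts]

theorem update_slide_subset_range (hR : ∀ t, R t ⊆ range e) (h : RemovableBead i (R s))
    (t : Fin r) : Function.update R s (slide i (R s)) t ⊆ range e := by
  rcases eq_or_ne t s with rfl | hts
  · have hi := mem_range.1 (hR t h.1)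
    rw [Function.update_self, slide]
    exact insert_subset (mem_range.2 (by omega)) ((erase_subset _ _).trans (hR t))
  · rw [Function.update_of_ne hts]
    exact hR t

theorem rowKleshchev_of_isKleshchev {a : Fin r → ZMod e} {lam : Fin r → ℕ → ℕ}
    (h : IsKleshchev a lam) (hR : ∀ s, R s ⊆ range e) (ha : ∀ s, a s = #(R s))
    (hlam : ∀ s, lam s = parts (R s)) : RowKleshchev R := by
  induction h generalizing R with
  | empty => exact .flush fun s => flush_iff_parts_eq_zero.2 (hlam s).symm
  | step lam A hA _ ih =>
    obtain rfl : a = fun s => (#(R s) : ZMod e) := funext ha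
    obtain rfl : lam = fun s => parts (R s) := funext hlam
    obtain ⟨s, n⟩ := A
    obtain ⟨i, hi, hres⟩ := exists_res_eq_of_removable hR hA.1.1
    obtain ⟨hgood, hn⟩ := ((hasSignature_beads hR hi).good_iff (s, n)).1 ⟨hA, hres⟩
    have hrem : RemovableBead i (R s) := hgood.1.1
    obtain rfl : n = removableNode i (R s) := hn
    refine .slide hgood (ih (update_slide_subset_range hR hrem) (fun t => ?_) fun t => ?_)
    · rw [card_update_slide hrem]
    · rw [removeNode_removableNode hrem]

theorem isKleshchev_of_rowKleshchev (h : RowKleshchev R) (hR : ∀ s, R s ⊆ range e) :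
    IsKleshchev (fun s => (#(R s) : ZMod e)) fun s => parts (R s) := by
  induction h with
  | flush h =>
    simp only [fun s => flush_iff_parts_eq_zero.1 (h s)]
    exact .empty
  | @slide R i s hgood _ ih =>
    have hrem : RemovableBead i (R s) := hgood.1.1
    have hi := mem_range.1 (hR s hrem.1)
    have hnode := ((hasSignature_beads hR hi).good_iff (s, removableNode i (R s))).2 ⟨hgood, rfl⟩
    refine .step _ _ hnode.1 ?_
    simpa only [removeNode_removableNode hrem, card_update_slide hrem] using
      ih (update_slide_subset_range hR hrem)

theorem isKleshchev_parts_iff (hR : ∀ s, R s ⊆ range e) :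
    (IsKleshchev (fun s => (#(R s) : ZMod e)) fun s => parts (R s)) ↔ RowKleshchev R :=
  ⟨fun h => rowKleshchev_of_isKleshchev h hR (fun _ => rfl) fun _ => rfl,
    fun h => isKleshchev_of_rowKleshchev h hR⟩

end RowKleshchev

section ThreeRows

variable {rem add : Fin 3 → Prop}

theorem rowNormal_two_iff : RowNormal rem add 2 ↔ rem 2 := by
  simp [RowNormal, Fin.forall_fin_succ]

theorem rowNormal_one_iff : RowNormal rem add 1 ↔ rem 1 ∧ ¬ add 2 := by
  have h₁₂ : Ioo (1 : Fin 3) 2 = ∅ := by decide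
  simp [RowNormal, Fin.forall_fin_succ, h₁₂]

theorem rowNormal_zero_iff :
    RowNormal rem add 0 ↔ rem 0 ∧ ¬ add 1 ∧ (add 2 → rem 1) := by
  have h₀₁ : Ioo (0 : Fin 3) 1 = ∅ := by decide
  have h₀₂ : Ioo (0 : Fin 3) 2 = {1} := by decide
  by_cases h₁ : add 1 <;> by_cases h₁' : rem 1 <;>
    simp [RowNormal, Fin.forall_fin_succ, h₀₁, h₀₂, filter_singleton, h₁, h₁']

theorem rowGood_zero_iff :
    RowGood rem add 0 ↔ rem 0 ∧ ¬ add 1 ∧ (add 2 → rem 1) := by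
  rw [RowGood, rowNormal_zero_iff]
  exact and_iff_left fun t ht => absurd ht (Fin.not_lt_zero t)

theorem rowGood_one_iff (hdisj : ∀ s, rem s → ¬ add s) :
    RowGood rem add 1 ↔ rem 1 ∧ ¬ add 2 ∧ ¬ rem 0 := by
  have hlt : ∀ t : Fin 3, t < 1 ↔ t = 0 := by decide
  have := hdisj 1
  simp only [RowGood, hlt, forall_eq, rowNormal_zero_iff, rowNormal_one_iff]
  tauto

theorem rowGood_two_iff (hdisj : ∀ s, rem s → ¬ add s) :
    RowGood rem add 2 ↔ rem 2 ∧ ¬ rem 1 ∧ (rem 0 → add 1) := by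
  have hlt : ∀ t : Fin 3, t < 2 ↔ t = 0 ∨ t = 1 := by decide
  have := hdisj 2
  simp only [RowGood, hlt, forall_eq_or_imp, forall_eq, rowNormal_zero_iff, rowNormal_one_iff,
    rowNormal_two_iff]
  tauto

variable {R : Fin 3 → Finset ℕ} {i : ℕ}

theorem RowGood.goodMove {s : Fin 3}
    (h : RowGood (fun t => RemovableBead i (R t)) (fun t => AddableBead i (R t)) s) :
    GoodMove (R 0) (R 1) (R 2) (Function.update R s (slide i (R s)) 0)
      (Function.update R s (slide i (R s)) 1) (Function.update R s (slide i (R s)) 2) := by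
  obtain rfl | rfl | rfl : s = 0 ∨ s = 1 ∨ s = 2 := by omega
  · obtain ⟨h₀, h₁, h₂⟩ := rowGood_zero_iff.1 h
    exact .fst h₀ h₁ h₂
  · obtain ⟨h₁, h₂, h₀⟩ := (rowGood_one_iff fun _ => RemovableBead.not_addable).1 h
    exact .snd h₁ h₂ h₀
  · obtain ⟨h₂, h₁, h₀⟩ := (rowGood_two_iff fun _ => RemovableBead.not_addable).1 h
    exact .trd h₂ h₁ h₀

theorem GoodMove.rowKleshchev {P Q S P' Q' S' : Finset ℕ} (h : GoodMove P Q S P' Q' S')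
    (h' : RowKleshchev ![P', Q', S']) : RowKleshchev ![P, Q, S] := by
  cases h with
  | @fst i _ _ _ hP hQ hS =>
    refine .slide (i := i) (s := 0) (rowGood_zero_iff.2 ⟨hP, hQ, hS⟩) ?_
    convert h' using 1
    ext t : 1
    fin_cases t <;> rfl
  | @snd i _ _ _ hQ hS hP =>
    refine .slide (i := i) (s := 1)
      ((rowGood_one_iff fun _ => RemovableBead.not_addable).2 ⟨hQ, hS, hP⟩) ?_
    convert h' using 1
    ext t : 1
    fin_cases t <;> rfl
  | @trd i _ _ _ hS hQ hP =>
    refine .slide (i := i) (s := 2)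
      ((rowGood_two_iff fun _ => RemovableBead.not_addable).2 ⟨hS, hQ, hP⟩) ?_
    convert h' using 1
    ext t : 1
    fin_cases t <;> rfl

theorem KleshchevTriple.rowKleshchev {P Q S : Finset ℕ} (h : KleshchevTriple P Q S) :
    RowKleshchev ![P, Q, S] := by
  induction h with
  | flush hP hQ hS => exact .flush fun s => by fin_cases s <;> assumption
  | move h _ ih => exact h.rowKleshchev ih

theorem rowKleshchev_iff_kleshchevTriple :
    RowKleshchev R ↔ KleshchevTriple (R 0) (R 1) (R 2) := by
  constructor
  · intro h
    induction h with
    | flush h => exact .flush (h 0) (h 1) (h 2)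
    | slide h _ ih => exact .move h.goodMove ih
  · intro h
    convert h.rowKleshchev using 1
    ext t : 1
    fin_cases t <;> rfl

end ThreeRows

/-! ### Rows of matrices -/

/-- The row `s` of a matrix, as the set of positions of its beads. -/
def row {e r : ℕ} (M : Fin r → Fin e → Bool) (s : Fin r) : Finset ℕ :=
  ({c | M s c = true} : Finset (Fin e)).map Fin.valEmbedding

section Row

variable {e r : ℕ} {M : Fin r → Fin e → Bool} {s : Fin r}

theorem mem_row {n : ℕ} : n ∈ row M s ↔ ∃ h : n < e, M s ⟨n, h⟩ = true := by
  simp only [row, mem_map, mem_filter_univ, Fin.valEmbedding_apply]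
  exact ⟨by rintro ⟨c, hc, rfl⟩; exact ⟨c.2, hc⟩, fun ⟨h, hc⟩ => ⟨_, hc, rfl⟩⟩

theorem row_subset_range : row M s ⊆ range e := fun _ hn => mem_range.2 (mem_row.1 hn).1

theorem rank_zero (i : Fin e) : rank (fun _ => 0) i = i := by
  have hprec : ({j | prec (fun _ => 0) j i} : Finset (Fin e)) = Iio i := by
    ext j
    simp [prec]
  ext
  simp only [rank, hprec, Fin.card_Iio]

theorem nsum_zero : nsum (fun _ => 0) M s = #(row M s) := by
  simp only [nsum, beads, rank_zero, zero_add, row, card_map, card_filter]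

theorem Tset_zero : Tset (fun _ => 0) M s = betaSet (row M s) := by
  ext z
  simp only [Tset, betaSet, Set.mem_ofPred_eq, beads, rank_zero, zero_add, mem_row]
  constructor
  · rintro (hz | ⟨-, h, hlt⟩)
    · exact Or.inl hz
    split_ifs at hlt with hM
    · have hz : z.toNat < e := (Nat.div_eq_zero_iff_lt (by omega)).1 (Nat.lt_one_iff.1 hlt)
      simp only [Nat.mod_eq_of_lt hz] at hM
      exact Or.inr ⟨hz, hM⟩
    · exact absurd hlt (Nat.not_lt_zero _)
  · rintro (hz | ⟨hz, hM⟩)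
    · exact Or.inl hz
    refine or_iff_not_imp_left.2 fun hneg => ⟨not_lt.1 hneg, Nat.mod_lt _ (by omega), ?_⟩
    simp only [Nat.mod_eq_of_lt hz, Nat.div_eq_of_lt hz, hM, if_true, zero_lt_one]

theorem PtPart_zero : PtPart (fun _ => 0) M = fun s => parts (row M s) := by
  funext s x
  simp only [PtPart, parts, Tset_zero, nsum_zero]

theorem PtCharge_zero : PtCharge (fun _ => 0) M = fun s => (#(row M s) : ZMod e) := by
  funext s
  simp only [PtCharge, nsum_zero]

theorem isKleshchev_Pt_zero_iff {M : Fin 3 → Fin e → Bool} :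
    IsKleshchev (PtCharge (fun _ => 0) M) (PtPart (fun _ => 0) M) ↔
      KleshchevTriple (row M 0) (row M 1) (row M 2) := by
  rw [PtCharge_zero, PtPart_zero, isKleshchev_parts_iff fun _ => row_subset_range,
    rowKleshchev_iff_kleshchevTriple]

end Row

/-! ### The block `D^u` -/

theorem ncard_sep_comp {α β : Type*} {φ : α → β} (hφ : Function.Injective φ) {D : Set α}
    {T : Finset β} (h : φ '' D = T) (p : β → Prop) :
    {M ∈ D | p (φ M)}.ncard = #{t ∈ T | p t} := by
  rw [← Set.ncard_coe_finset, coe_filter, ← Set.ncard_image_of_injective _ hφ]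
  congr 1
  simp only [← mem_coe, ← h]
  exact Set.image_inter_preimage φ D {t | p t}

/-- The positions of the singleton row, the core row and the large row in the matrices of `D^u`. -/
def slot : Fin 6 → Fin 3 → Fin 3 :=
  ![![0, 1, 2], ![1, 2, 0], ![2, 0, 1], ![1, 0, 2], ![0, 2, 1], ![2, 1, 0]]

theorem slot_surjective (u : Fin 6) : Function.Surjective (slot u) := by
  revert u
  decide

theorem columns_comp_slot (u : Fin 6) :
    (ycol u ∘ slot u = ycol 0 ∧ zcol u ∘ slot u = zcol 0 ∧ oycol u ∘ slot u = oycol 0 ∧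
      ozcol u ∘ slot u = ozcol 0 ∧ aacol u ∘ slot u = aacol 0 ∧ abcol u ∘ slot u = abcol 0) ∨
    (ycol u ∘ slot u = zcol 0 ∧ zcol u ∘ slot u = ycol 0 ∧ oycol u ∘ slot u = ozcol 0 ∧
      ozcol u ∘ slot u = oycol 0 ∧ aacol u ∘ slot u = abcol 0 ∧ abcol u ∘ slot u = aacol 0) := by
  revert u
  decide

/-- The rows of a matrix with three rows, from top to bottom. -/
def rowTriple {e : ℕ} (M : Fin 3 → Fin e → Bool) : Finset ℕ × Finset ℕ × Finset ℕ :=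
  (row M 0, row M 1, row M 2)

theorem rowTriple_injective {e : ℕ} :
    Function.Injective (rowTriple : (Fin 3 → Fin e → Bool) → _) := by
  intro M M' h
  simp only [rowTriple, Prod.mk.injEq] at h
  have hrow : ∀ s, row M s = row M' s := by
    simpa [Fin.forall_fin_succ] using h
  funext s c
  have hc := Finset.ext_iff.1 (hrow s) c
  simpa [mem_row] using hc

theorem arrangedKleshchev_comp_slot_iff {e : ℕ} (u : Fin 6) (M : Fin 3 → Fin e → Bool) :
    ArrangedKleshchev u (row (M ∘ slot u) 0) (row (M ∘ slot u) 1) (row (M ∘ slot u) 2) ↔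
      KleshchevTriple (row M 0) (row M 1) (row M 2) := by
  fin_cases u <;> rfl

theorem row_eq_map {e r : ℕ} {M : Fin r → Fin e → Bool} {s : Fin r} {T : Finset (Fin e)}
    (h : ∀ c, M s c = true ↔ c ∈ T) : row M s = T.map Fin.valEmbedding := by
  simp only [row, h, filter_univ_mem]

theorem range_val_orderEmbOfFin {e w : ℕ} {W : Finset (Fin e)} (hW : #W = w) :
    Set.range (fun k => (W.orderEmbOfFin hW k : ℕ)) = W.map Fin.valEmbedding := by
  rw [coe_map, ← range_orderEmbOfFin W hW, ← Set.range_comp]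
  rfl

section Duset

variable {e y z : ℕ} {Y Z : Finset (Fin e)} {hY : #Y = y + 1} {hZ : #Z = z + 1}

theorem Duset_eq_union_range (u : Fin 6) :
    Duset Y Z hY hZ u = Set.range (alphaM Y Z hY u) ∪ Set.range (betaM Y Z hZ u) ∪
      Set.range fun p : Fin (y + 1) × Fin (z + 1) => gammaM Y Z hY hZ u p.1 p.2 := by
  ext M
  simp only [Duset, Set.mem_ofPred_eq, Set.mem_union, Set.mem_range, Prod.exists, or_assoc,
    eq_comm]

theorem image_comp_slot_Duset (hYZ : Disjoint Y Z) (u : Fin 6) :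
    (· ∘ slot u) '' Duset Y Z hY hZ u = Duset Y Z hY hZ 0 ∨
      (· ∘ slot u) '' Duset Y Z hY hZ u = Duset Z Y hZ hY 0 := by
  have hdisj := disjoint_left.1 hYZ
  simp only [Duset_eq_union_range, Set.image_union, ← Set.range_comp]
  refine (columns_comp_slot u).imp ?_ ?_ <;>
    rintro ⟨hy, hz, hoy, hoz, haa, hab⟩ <;>
    simp only [funext_iff, Function.comp_apply] at hy hz hoy hoz haa hab
  · congr 2
    · congr 1
      funext k s c
      simp only [Function.comp_apply, alphaM, hy, hz, haa]
    · congr 1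
      funext l s c
      simp only [Function.comp_apply, betaM, hy, hz, hab]
    · funext p s c
      simp only [Function.comp_apply, gammaM, hy, hz, hoy, hoz]
  · have hα : (· ∘ slot u) ∘ alphaM Y Z hY u = betaM Z Y hY 0 := by
      funext k s c
      simp only [Function.comp_apply, alphaM, betaM, hy, hz, haa]
    have hβ : (· ∘ slot u) ∘ betaM Y Z hZ u = alphaM Z Y hZ 0 := by
      funext l s c
      simp only [Function.comp_apply, alphaM, betaM, hy, hz, hab]
    have hγ : ((· ∘ slot u) ∘ fun p : Fin (y + 1) × Fin (z + 1) => gammaM Y Z hY hZ u p.1 p.2) =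
        (fun p => gammaM Z Y hZ hY 0 p.1 p.2) ∘ Prod.swap := by
      funext ⟨k, l⟩ s c
      have hk := Y.orderEmbOfFin_mem hY k
      have hl := Z.orderEmbOfFin_mem hZ l
      simp only [Function.comp_apply, gammaM, hy, hz, hoy, hoz, Prod.swap]
      grind
    rw [hα, hβ, hγ, Prod.swap_surjective.range_comp, Set.union_comm (Set.range (betaM _ _ _ _))]

theorem rowTriple_alphaM_zero (k : Fin (y + 1)) :
    rowTriple (alphaM Y Z hY 0 k) =
      ({(Y.orderEmbOfFin hY k : ℕ)}, Y.map Fin.valEmbedding,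
        (Y.map Fin.valEmbedding ∪ Z.map Fin.valEmbedding).erase (Y.orderEmbOfFin hY k : ℕ)) := by
  have hk := Y.orderEmbOfFin_mem hY k
  rw [rowTriple, row_eq_map (T := {Y.orderEmbOfFin hY k}), row_eq_map (T := Y),
    row_eq_map (T := (Y ∪ Z).erase (Y.orderEmbOfFin hY k)), map_erase, map_union, map_singleton]
  · rfl
  all_goals
    intro c
    simp only [alphaM, aacol, ycol, zcol, mem_erase, mem_union, mem_singleton,
      Matrix.cons_val]
    grind

theorem rowTriple_betaM_zero (hYZ : Disjoint Y Z) (l : Fin (z + 1)) :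
    rowTriple (betaM Y Z hZ 0 l) =
      ({(Z.orderEmbOfFin hZ l : ℕ)}, Y.map Fin.valEmbedding,
        (Y.map Fin.valEmbedding ∪ Z.map Fin.valEmbedding).erase (Z.orderEmbOfFin hZ l : ℕ)) := by
  have hl := Z.orderEmbOfFin_mem hZ l
  have hdisj := disjoint_left.1 hYZ
  rw [rowTriple, row_eq_map (T := {Z.orderEmbOfFin hZ l}), row_eq_map (T := Y),
    row_eq_map (T := (Y ∪ Z).erase (Z.orderEmbOfFin hZ l)), map_erase, map_union, map_singleton]
  · rfl
  all_goals
    intro c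
    simp only [betaM, abcol, ycol, zcol, mem_erase, mem_union, mem_singleton,
      Matrix.cons_val]
    grind

theorem rowTriple_gammaM_zero (hYZ : Disjoint Y Z) (k : Fin (y + 1)) (l : Fin (z + 1)) :
    rowTriple (gammaM Y Z hY hZ 0 k l) =
      ({(Y.orderEmbOfFin hY k : ℕ)},
        insert (Z.orderEmbOfFin hZ l : ℕ)
          ((Y.map Fin.valEmbedding).erase (Y.orderEmbOfFin hY k : ℕ)),
        (Y.map Fin.valEmbedding ∪ Z.map Fin.valEmbedding).erase (Z.orderEmbOfFin hZ l : ℕ)) := by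
  have hk := Y.orderEmbOfFin_mem hY k
  have hl := Z.orderEmbOfFin_mem hZ l
  have hdisj := disjoint_left.1 hYZ
  rw [rowTriple, row_eq_map (T := {Y.orderEmbOfFin hY k}),
    row_eq_map (T := insert (Z.orderEmbOfFin hZ l) (Y.erase (Y.orderEmbOfFin hY k))),
    row_eq_map (T := (Y ∪ Z).erase (Z.orderEmbOfFin hZ l)), map_insert, map_erase, map_erase,
    map_union, map_singleton]
  · rfl
  all_goals
    intro c
    simp only [gammaM, oycol, ozcol, ycol, zcol, mem_erase, mem_union, mem_insert, mem_singleton,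
      Matrix.cons_val]
    grind

theorem image_rowTriple_Duset_zero (hYZ : Disjoint Y Z) :
    rowTriple '' Duset Y Z hY hZ 0 =
      blockTriples (Y.map Fin.valEmbedding) (Z.map Fin.valEmbedding) := by
  simp only [Duset_eq_union_range, Set.image_union, ← Set.range_comp, Function.comp_def,
    rowTriple_alphaM_zero, rowTriple_betaM_zero hYZ, rowTriple_gammaM_zero hYZ]
  rw [blockTriples, coe_union, coe_image, coe_image, coe_union, Set.image_union, coe_product,
    ← range_val_orderEmbOfFin hY, ← range_val_orderEmbOfFin hZ, ← Set.range_prodMap,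
    ← Set.range_comp, ← Set.range_comp, ← Set.range_comp]
  rfl

theorem exists_image_rowTriple_comp_slot_Duset (hYZ : Disjoint Y Z) (u : Fin 6) :
    ∃ A B : Finset ℕ, Disjoint A B ∧ #A * #B = (y + 1) * (z + 1) ∧ #A + #B = y + z + 2 ∧
      (fun M => rowTriple (M ∘ slot u)) '' Duset Y Z hY hZ u = blockTriples A B := by
  have hdisj : Disjoint (Y.map Fin.valEmbedding) (Z.map Fin.valEmbedding) := (disjoint_map _).2 hYZ
  rw [← Function.comp_def rowTriple, Set.image_comp]
  rcases image_comp_slot_Duset (hY := hY) (hZ := hZ) hYZ u with h | h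
  · refine ⟨_, _, hdisj, ?_, ?_, h ▸ image_rowTriple_Duset_zero hYZ⟩
    · rw [card_map, card_map, hY, hZ]
    · rw [card_map, card_map, hY, hZ]
      ring
  · refine ⟨_, _, hdisj.symm, ?_, ?_, h ▸ image_rowTriple_Duset_zero hYZ.symm⟩
    · rw [card_map, card_map, hY, hZ, mul_comm]
    · rw [card_map, card_map, hY, hZ]
      ring

end Duset

theorem rowTriple_comp_slot_injective {e : ℕ} (u : Fin 6) :
    Function.Injective fun M : Fin 3 → Fin e → Bool => rowTriple (M ∘ slot u) :=
  rowTriple_injective.comp (slot_surjective u).injective_comp_right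

end

/-- `|D^u| = (y+2)(z+2) − 1`, and `D^u` contains exactly
`(y+1)(z+1)` Kleshchev multipartitions. -/
theorem Duset_counts (e : ℕ) (he : 2 ≤ e)
    (X Y Z : Finset (Fin e)) {y z : ℕ} (hY : Y.card = y + 1) (hZ : Z.card = z + 1)
    (hXY : Disjoint X Y) (hXZ : Disjoint X Z) (hYZ : Disjoint Y Z)
    (hcover : X ∪ Y ∪ Z = Finset.univ) (u : Fin 6) :
    Set.ncard (Duset Y Z hY hZ u) = (y + 2) * (z + 2) - 1 ∧
    Set.ncard {M ∈ Duset Y Z hY hZ u |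
      IsKleshchev (PtCharge (fun _ => 0) M) (PtPart (fun _ => 0) M)} =
        (y + 1) * (z + 1) := by
  obtain ⟨A, B, hAB, hmul, hadd, himage⟩ :=
    exists_image_rowTriple_comp_slot_Duset (hY := hY) (hZ := hZ) hYZ u
  have hinj := rowTriple_comp_slot_injective (e := e) u
  have hpos : 0 < A.card * B.card := hmul ▸ by positivity
  obtain ⟨hA, hB⟩ := CanonicallyOrderedAdd.mul_pos.1 hpos
  constructor
  · rw [← Set.ncard_image_of_injective _ hinj, himage, Set.ncard_coe_finset,
      card_blockTriples hAB, hadd, hmul]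
    exact (Nat.sub_eq_of_eq_add (by ring)).symm
  · simp only [isKleshchev_Pt_zero_iff, ← arrangedKleshchev_comp_slot_iff u]
    rw [← hmul, ← card_filter_arrangedKleshchev hAB (Finset.card_pos.1 hA) (Finset.card_pos.1 hB) u]
    exact ncard_sep_comp hinj himage fun t => ArrangedKleshchev u t.1 t.2.1 t.2.2

end
end AK
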